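/- arXiv:1604.07267 — 4 statements merged into one kernel-verified Lean document; each statement's English description precedes it below -/
import Mathlib

section
/- Let p be a prime and let G be a finite thin p-group of order at least p². Then G has a non-inner automorphism of order p; that is, there exists a group automorphism φ of G such that φ has order exactly p in Aut(G) and there is no g ∈ G with φ(x) = g⁻¹xg for all x ∈ G. -/
/-- A finite `p`-group is *thin* if every antichain in the lattice of its normal subgroups
contains at most `p + 1` elements. -/
def IsThinPGroup (p : ℕ) (G : Type*) [Group G] : Prop :=
  ∀ S : Set (Subgroup G), (∀ N ∈ S, N.Normal) → IsAntichain (· ≤ ·) S → S.ncard ≤ p + 1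

open scoped commutatorElement

namespace ThinP

theorem nil_le {G : Type*} [Group G] [Group.IsNilpotent G] (A L : Subgroup G) [L.Normal]
    (h : A ≤ ⁅A, (⊤ : Subgroup G)⁆ ⊔ L) : A ≤ L := by
  obtain ⟨n, hn⟩ := Subgroup.nilpotent_iff_lowerCentralSeries.1 (inferInstance : Group.IsNilpotent G)
  have key : ∀ k, A ≤ (⊤ : Subgroup G).lowerCentralSeries k ⊔ L := by
    intro k
    induction k with
    | zero => simp
    | succ k ih =>
      refine h.trans (sup_le ?_ le_sup_right)
      refine (Subgroup.commutator_mono ih le_rfl).trans ?_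
      rw [Subgroup.commutator_le]
      intro x hx y _
      rw [Subgroup.mem_sup_of_normal_right] at hx
      obtain ⟨a, ha, b, hb, rfl⟩ := hx
      have : ⁅a * b, y⁆ = ⁅a, y⁆ * ((y * a * y⁻¹) * (b * (y * b⁻¹ * y⁻¹)) * (y * a * y⁻¹)⁻¹) := by
        simp only [commutatorElement_def]; group
      rw [this]
      refine Subgroup.mul_mem_sup ?_ ?_
      · exact Subgroup.commutator_mem_commutator ha (Subgroup.mem_top y)
      · refine Subgroup.Normal.conj_mem inferInstance _ ?_ _
        exact L.mul_mem hb (Subgroup.Normal.conj_mem inferInstance _ (L.inv_mem hb) _)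
  have := key n
  rwa [hn, bot_sup_eq] at this

theorem frat {p : ℕ} (hp : p.Prime) {G : Type*} [Group G] [Finite G] (hpG : IsPGroup p G)
    (K : Subgroup G) (hK : K ≠ ⊤) :
    ∃ χ : G → ZMod p, (∀ x y, χ (x * y) = χ x + χ y) ∧ (∃ t, χ t = 1) ∧ ∀ k ∈ K, χ k = 0 := by
  have := Fact.mk hp
  obtain h | ⟨L, hL, hKL⟩ := eq_top_or_exists_le_coatom K
  · exact absurd h hK
  have : Group.IsNilpotent G := hpG.isNilpotent
  have hLn : L.Normal := Subgroup.NormalizerCondition.normal_of_coatom L Group.normalizerCondition_of_isNilpotent hL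
  have hQ := hpG.to_quotient L
  have : Nontrivial (G ⧸ L) := by
    rw [QuotientGroup.nontrivial_iff]; exact hL.1
  have hd : p ∣ Nat.card (G ⧸ L) := by
    obtain ⟨n, hn, h⟩ := hQ.nontrivial_iff_card.1 inferInstance
    rw [h]; exact dvd_pow_self p hn.ne'
  obtain ⟨y, hy⟩ := exists_prime_orderOf_dvd_card' p hd
  have htop : Subgroup.zpowers y = ⊤ := by
    obtain ⟨x, rfl⟩ := QuotientGroup.mk'_surjective L y
    have hle : L ≤ (Subgroup.zpowers (QuotientGroup.mk' L x)).comap (QuotientGroup.mk' L) := by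
      intro l hl
      have : QuotientGroup.mk' L l = 1 := by simpa using hl
      simp only [Subgroup.mem_comap, this, Subgroup.one_mem]
    have hx : x ∈ (Subgroup.zpowers (QuotientGroup.mk' L x)).comap (QuotientGroup.mk' L) := by
      simp [Subgroup.mem_comap]
    have hlt : L < (Subgroup.zpowers (QuotientGroup.mk' L x)).comap (QuotientGroup.mk' L) := by
      refine lt_of_le_of_ne hle fun e => ?_
      have : x ∈ L := by rw [e]; exact hx
      have h1 : QuotientGroup.mk' L x = 1 := by simpa using this
      rw [h1, orderOf_one] at hy
      exact hp.one_lt.ne hy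
    have := hL.2 _ hlt
    rw [eq_top_iff]
    intro q _
    obtain ⟨q, rfl⟩ := QuotientGroup.mk'_surjective L q
    have h2 : q ∈ (Subgroup.zpowers (QuotientGroup.mk' L x)).comap (QuotientGroup.mk' L) := by
      rw [this]; trivial
    exact h2
  have hcard : Nat.card (G ⧸ L) = p := by
    rw [← hy, ← Nat.card_zpowers, htop, Subgroup.card_top]
  have e : (G ⧸ L) ≃* Multiplicative (ZMod p) := by
    refine mulEquivOfPrimeCardEq (p := p) hcard ?_
    simp
  obtain ⟨t, ht⟩ := QuotientGroup.mk'_surjective L (e.symm (Multiplicative.ofAdd 1))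
  refine ⟨fun x => (e (QuotientGroup.mk' L x)).toAdd, ?_, ⟨t, ?_⟩, ?_⟩
  · intro x y; simp
  · simp only [ht]; simp
  · intro k hk
    have : QuotientGroup.mk' L k = 1 := by simpa using hKL hk
    simp only [this]; simp

section hom
variable {p : ℕ} {G : Type*} [Group G] {χ : G → ZMod p} (hχ : ∀ x y, χ (x * y) = χ x + χ y)

def toHom (χ : G → ZMod p) (hχ : ∀ x y, χ (x * y) = χ x + χ y) : G →* Multiplicative (ZMod p) :=
  MonoidHom.mk' (fun x => Multiplicative.ofAdd (χ x)) (by intro a b; rw [hχ]; rfl)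

theorem toHom_ker {x : G} : x ∈ (toHom χ hχ).ker ↔ χ x = 0 := by
  rw [MonoidHom.mem_ker]; rfl
include hχ
theorem h_one : χ 1 = 0 := by have := hχ 1 1; simpa using this
theorem h_inv (x : G) : χ x⁻¹ = - χ x := by
  have := hχ x x⁻¹; rw [mul_inv_cancel, h_one hχ] at this; exact (neg_eq_of_add_eq_zero_right this.symm).symm
theorem h_pow (x : G) (n : ℕ) : χ (x ^ n) = n * χ x := by
  induction n with
  | zero => simp [h_one hχ]
  | succ n ih => rw [pow_succ, hχ, ih]; push_cast; ring
theorem h_zpow (x : G) (n : ℤ) : χ (x ^ n) = n * χ x := by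
  cases n with
  | ofNat n => simp [h_pow hχ]
  | negSucc n => rw [zpow_negSucc, h_inv hχ, h_pow hχ, Int.cast_negSucc]; push_cast; ring
theorem h_comm {x : G} (hx : x ∈ commutator G) : χ x = 0 := by
  rw [← toHom_ker hχ]
  exact Abelianization.commutator_subset_ker _ hx
end hom

section pw
variable {p : ℕ} [Fact p.Prime] {G : Type*} [Group G]

theorem pv_mod {x : G} (hx : x ^ p = 1) (n : ℕ) : x ^ (n : ZMod p).val = x ^ n := by
  rw [ZMod.val_natCast]
  conv_rhs => rw [← Nat.mod_add_div n p, pow_add, pow_mul, hx, one_pow, mul_one]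

theorem pv_add {x : G} (hx : x ^ p = 1) (a b : ZMod p) : x ^ (a + b).val = x ^ a.val * x ^ b.val := by
  rw [← pow_add, ← pv_mod hx (a.val + b.val)]; simp

theorem pv_mul {x : G} (hx : x ^ p = 1) (a b : ZMod p) : x ^ (a * b).val = (x ^ a.val) ^ b.val := by
  rw [← pow_mul, ← pv_mod hx (a.val * b.val)]; simp

theorem pv_int {x : G} (hx : x ^ p = 1) (n : ℤ) : x ^ (n : ZMod p).val = x ^ n := by
  rw [← zpow_natCast, ZMod.val_intCast]
  conv_rhs => rw [← Int.emod_add_mul_ediv n p, zpow_add, zpow_mul, zpow_natCast, hx, one_zpow, mul_one]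

theorem pv_eq_one {x : G} (hx : orderOf x = p) {a : ZMod p} (h : x ^ a.val = 1) : a = 0 := by
  rw [← orderOf_dvd_iff_pow_eq_one, hx] at h
  rw [← ZMod.natCast_zmod_val a]
  exact (ZMod.natCast_eq_zero_iff _ _).2 h

theorem inner_of {p : ℕ} (hp : p.Prime) {G : Type*} [Group G] [Finite G]
    (hno : ∀ φ : MulAut G, orderOf φ = p → ∃ g : G, ∀ x : G, φ x = g⁻¹ * x * g)
    {z g : G} (hz : z ^ p = 1) (hg : g ^ p = 1) (hzc : ∀ x, x * z = z * x)
    {χ α β : G → ZMod p} (hgχ : ∀ y, g * y = y * (g * z ^ (χ y).val))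
    (hα : ∀ x y, α (x * y) = α x + α y)
    (hβ : ∀ x y, β (x * y) = β x + β y + α x * χ y)
    (hαg : α g = 0) (hαz : α z = 0) (hβg : β g = 0) (hβz : β z = 0) :
    ∃ h : G, ∀ x, h⁻¹ * x * h = x * (g ^ (α x).val * z ^ (β x).val) := by
  have := Fact.mk hp
  have hzc' : ∀ x, Commute z x := fun x => (hzc x).symm
  have hgk : ∀ (k : ℕ) y, g ^ k * y = y * (g ^ k * z ^ ((χ y).val * k)) := by
    intro k y
    have h1 : SemiconjBy y (g * z ^ (χ y).val) g := (hgχ y).symm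
    have h2 := h1.pow_right k
    rw [((hzc' g).symm.pow_right _).mul_pow, ← pow_mul] at h2
    exact h2.symm
  set δ : G → G := fun x => g ^ (α x).val * z ^ (β x).val with hδ
  let φ : G →* G := MonoidHom.mk' (fun x => x * δ x) (by
    intro x y
    have e1 : z ^ (α x * χ y).val = z ^ ((χ y).val * (α x).val) := by
      rw [mul_comm, pv_mul hz, pow_mul]
    simp only [hδ]
    rw [hα, hβ, pv_add hg, pv_add hz, pv_add hz, e1]
    have c1 := (hzc' y).pow_left (β x).val
    have c2 := (hzc' (g ^ (α y).val)).pow_left (β x).val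
    have c3 := (hzc' (g ^ (α y).val)).pow_left ((χ y).val * (α x).val)
    have c4 := (hzc' (z ^ (β x).val * z ^ (β y).val)).pow_left ((χ y).val * (α x).val)
    calc x * y * (g ^ (α x).val * g ^ (α y).val * (z ^ (β x).val * z ^ (β y).val * z ^ ((χ y).val * (α x).val)))
        = x * y * (g ^ (α x).val * g ^ (α y).val * (z ^ ((χ y).val * (α x).val) * (z ^ (β x).val * z ^ (β y).val))) := by
          rw [c4.eq]
      _ = x * y * (g ^ (α x).val * (g ^ (α y).val * z ^ ((χ y).val * (α x).val)) * (z ^ (β x).val * z ^ (β y).val)) := by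
          simp only [mul_assoc]
      _ = x * (y * (g ^ (α x).val * z ^ ((χ y).val * (α x).val))) * (g ^ (α y).val * z ^ (β x).val) * z ^ (β y).val := by
          rw [← c3.eq]; simp only [mul_assoc]
      _ = x * (g ^ (α x).val * y) * (z ^ (β x).val * g ^ (α y).val) * z ^ (β y).val := by
          rw [← hgk, c2.eq]
      _ = x * g ^ (α x).val * (y * z ^ (β x).val) * g ^ (α y).val * z ^ (β y).val := by
          simp only [mul_assoc]
      _ = x * (g ^ (α x).val * z ^ (β x).val) * (y * (g ^ (α y).val * z ^ (β y).val)) := by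
          rw [← c1.eq]; simp only [mul_assoc])
  have hφ : ∀ x, φ x = x * δ x := fun x => rfl
  have hφg : φ g = g := by rw [hφ]; simp [hδ, hαg, hβg]
  have hφz : φ z = z := by rw [hφ]; simp [hδ, hαz, hβz]
  have hφδ : ∀ x, φ (δ x) = δ x := by
    intro x; simp only [hδ, map_mul, map_pow, hφg, hφz]
  have hinj : Function.Injective φ := by
    rw [injective_iff_map_eq_one]
    intro x hx
    rw [hφ] at hx
    have : x = (δ x)⁻¹ := eq_inv_of_mul_eq_one_left hx
    have h2 : φ x = x := by rw [this, map_inv, hφδ]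
    rw [hφ, hx] at h2; exact h2.symm
  let ψ : MulAut G := MulEquiv.ofBijective φ (Finite.injective_iff_bijective.1 hinj)
  have hψ : ∀ x, ψ x = x * δ x := fun x => rfl
  have hδp : ∀ x, δ x ^ p = 1 := by
    intro x
    simp only [hδ]
    rw [(((hzc' g).symm.pow_right _).pow_left _).mul_pow, ← pow_mul, ← pow_mul, mul_comm, pow_mul, hg,
      mul_comm, pow_mul, hz]; simp
  have hpow : ∀ n : ℕ, ∀ x, (ψ ^ n) x = x * δ x ^ n := by
    intro n
    induction n with
    | zero => intro x; simp
    | succ n ih =>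
      intro x
      have : ψ (δ x) = δ x := hφδ x
      rw [pow_succ', MulAut.mul_apply, ih, map_mul, map_pow, this, hψ, mul_assoc, ← pow_succ']
  by_cases h1 : ψ = 1
  · refine ⟨1, fun x => ?_⟩
    have := DFunLike.congr_fun h1 x
    rw [hψ] at this
    simp only [MulAut.one_apply] at this
    simp only [hδ] at this
    rw [this]; simp
  · have ho : orderOf ψ = p := by
      refine orderOf_eq_prime ?_ h1
      ext x
      rw [hpow, hδp]; simp
    obtain ⟨h, hh⟩ := hno ψ ho
    exact ⟨h, fun x => (hh x).symm⟩
end pw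
end ThinP

namespace ThinP

theorem antichain_bound {A : Type*} [Group A] [Finite A] {p : ℕ} {P : Subgroup A → Prop}
    (hA : ∀ S : Set (Subgroup A), (∀ N ∈ S, P N) → IsAntichain (· ≤ ·) S → S.ncard ≤ p + 1)
    (F : Option (Option (Fin p)) → Subgroup A) (hP : ∀ i, P (F i))
    (hF : ∀ i j, F i ≤ F j → i = j) : False := by
  have hinj : Function.Injective F := fun i j h => hF i j h.le
  have h := hA (Set.range F) (by rintro _ ⟨i, rfl⟩; exact hP i) (by
    rintro _ ⟨i, rfl⟩ _ ⟨j, rfl⟩ hij hle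
    exact hij (by rw [hF i j hle]))
  rw [← Set.image_univ, Set.ncard_image_of_injective _ hinj, Set.ncard_univ] at h
  simp at h

theorem basis {p : ℕ} (hp : p.Prime) {G : Type*} [Group G] [Finite G] (hpG : IsPGroup p G)
    (hc : ∀ t : G, Subgroup.zpowers t ≠ ⊤)
    (χ : G → ZMod p) (hχ : ∀ x y, χ (x * y) = χ x + χ y) (hne : ∃ t, χ t ≠ 0) :
    ∃ (μ : G → ZMod p) (t m : G), (∀ x y, μ (x * y) = μ x + μ y) ∧ χ t = 1 ∧ χ m = 0 ∧ μ t = 0 ∧ μ m = 1 := by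
  have := Fact.mk hp
  obtain ⟨t, ht⟩ := hne
  obtain ⟨μ, hμ, ⟨m, hm⟩, hK⟩ := frat hp hpG (Subgroup.zpowers t) (hc t)
  have hμt := hK t (Subgroup.mem_zpowers t)
  refine ⟨μ, t ^ ((χ t)⁻¹).val, m * t ^ (-(χ m) * (χ t)⁻¹).val, hμ, ?_, ?_, ?_, ?_⟩
  · rw [h_pow hχ]; simp [ht]
  · rw [hχ, h_pow hχ]; simp [ht, mul_assoc]
  · rw [h_pow hμ]; simp [hμt]
  · rw [hμ, h_pow hμ]; simp [hμt, hm]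

theorem pair_surj {p : ℕ} (hp : p.Prime) {G : Type*} [Group G]
    {χ μ : G → ZMod p} (hχ : ∀ x y, χ (x * y) = χ x + χ y) (hμ : ∀ x y, μ (x * y) = μ x + μ y)
    {t m : G} (h1 : χ t = 1) (h2 : χ m = 0) (h3 : μ t = 0) (h4 : μ m = 1) :
    Function.Surjective ((toHom χ hχ).prod (toHom μ hμ)) := by
  have := Fact.mk hp
  rintro ⟨a, b⟩
  refine ⟨t ^ a.toAdd.val * m ^ b.toAdd.val, ?_⟩
  have e1 : χ (t ^ a.toAdd.val * m ^ b.toAdd.val) = a.toAdd := by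
    rw [hχ, h_pow hχ, h_pow hχ]; simp [h1, h2]
  have e2 : μ (t ^ a.toAdd.val * m ^ b.toAdd.val) = b.toAdd := by
    rw [hμ, h_pow hμ, h_pow hμ]; simp [h3, h4]
  rw [MonoidHom.prod_apply]
  ext
  · exact congrArg Multiplicative.ofAdd e1
  · exact congrArg Multiplicative.ofAdd e2

theorem not_cyclic {p : ℕ} (hp : p.Prime) {A : Type*} [Group A] {x y : A}
    (h : ∀ i j : ℤ, x ^ i * y ^ j = 1 → (p : ℤ) ∣ i ∧ (p : ℤ) ∣ j) : ¬ IsCyclic A := by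
  rintro ⟨e, he⟩
  obtain ⟨a, rfl⟩ := he x
  obtain ⟨b, rfl⟩ := he y
  simp only [← zpow_mul, ← zpow_add] at h
  by_cases hd : Int.gcd a b = 0
  · rw [Int.gcd_eq_zero_iff] at hd
    have := (h 1 0 (by simp [hd.1])).1
    exact hp.one_lt.ne' (by exact_mod_cast Int.eq_one_of_dvd_one (by positivity) this)
  · obtain ⟨a', b', hab, ha, hb⟩ := Int.exists_gcd_one (Nat.pos_of_ne_zero hd)
    have h1 := h b' (-a') (by rw [← zpow_zero e]; congr 1; linear_combination b' * ha - a' * hb)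
    have h2 : (p : ℤ) ∣ Int.gcd a' b' := Int.dvd_coe_gcd (by simpa using h1.2) h1.1
    rw [hab] at h2
    exact hp.one_lt.ne' (by exact_mod_cast Int.eq_one_of_dvd_one (by positivity) h2)

theorem dvd_of_zpow_mem {p : ℕ} (hp : p.Prime) {A : Type*} [Group A] {H : Subgroup A} {b : A}
    (hb : b ^ p = 1) (hbH : b ∉ H) {l : ℤ} (h : b ^ l ∈ H) : (p : ℤ) ∣ l := by
  by_contra hl
  have hco : IsCoprime (p : ℤ) l := by
    rw [(Nat.prime_iff_prime_int.1 hp).irreducible.coprime_iff_not_dvd]; exact hl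
  obtain ⟨u, v, huv⟩ := hco
  apply hbH
  have : b = (b ^ l) ^ v := by
    rw [← zpow_mul]
    conv_lhs => rw [← zpow_one b, ← huv, zpow_add, mul_comm u, zpow_mul, zpow_natCast, hb, one_zpow, one_mul, mul_comm]
  rw [this]; exact H.zpow_mem h v

theorem card_ge {p : ℕ} {A : Type*} [CommGroup A] [Finite A] {x y w : A}
    (h : ∀ i j k : ℤ, x ^ i * y ^ j * w ^ k = 1 → (p : ℤ) ∣ i ∧ (p : ℤ) ∣ j ∧ (p : ℤ) ∣ k) :
    p ^ 3 ≤ Nat.card A := by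
  let f : Fin p × Fin p × Fin p → A := fun u => x ^ (u.1 : ℤ) * y ^ (u.2.1 : ℤ) * w ^ (u.2.2 : ℤ)
  have hf : Function.Injective f := by
    rintro ⟨i, j, k⟩ ⟨i', j', k'⟩ he
    simp only [f] at he
    have h1 := h ((i : ℤ) - i') ((j : ℤ) - j') ((k : ℤ) - k') (by
      rw [zpow_sub, zpow_sub, zpow_sub]
      have : x ^ (i : ℤ) * (x ^ (i' : ℤ))⁻¹ * (y ^ (j : ℤ) * (y ^ (j' : ℤ))⁻¹) * (w ^ (k : ℤ) * (w ^ (k' : ℤ))⁻¹)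
        = (x ^ (i : ℤ) * y ^ (j : ℤ) * w ^ (k : ℤ)) * (x ^ (i' : ℤ) * y ^ (j' : ℤ) * w ^ (k' : ℤ))⁻¹ := by
        simp only [mul_inv]
        ac_rfl
      rw [this, he, mul_inv_cancel])
    have aux : ∀ a b : Fin p, (p : ℤ) ∣ (a : ℤ) - b → a = b := by
      intro a b hab
      obtain ⟨q, hq⟩ := hab
      have ha := a.2; have hb := b.2
      have : q = 0 := by
        by_contra hq0
        rcases lt_or_gt_of_ne hq0 with hq1 | hq1
        · have : (p : ℤ) * q ≤ p * (-1) := by gcongr; omega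
          omega
        · have : (p : ℤ) * 1 ≤ p * q := by gcongr; omega
          omega
      ext; rw [this] at hq; omega
    rw [aux _ _ h1.1, aux _ _ h1.2.1, aux _ _ h1.2.2]
  have := Nat.card_le_card_of_injective f hf
  simp only [Nat.card_prod, Nat.card_fin] at this
  calc p ^ 3 = p * (p * p) := by ring
    _ ≤ _ := this

theorem fin_dvd {p : ℕ} {a b : Fin p} (hab : (p : ℤ) ∣ (a : ℤ) - b) : a = b := by
  obtain ⟨q, hq⟩ := hab
  have ha := a.2; have hb := b.2
  have : q = 0 := by
    by_contra hq0
    rcases lt_or_gt_of_ne hq0 with hq1 | hq1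
    · have : (p : ℤ) * q ≤ p * (-1) := by gcongr; omega
      omega
    · have : (p : ℤ) * 1 ≤ p * q := by gcongr; omega
      omega
  ext; rw [this] at hq; omega

theorem core {p : ℕ} (hp : p.Prime) {A : Type*} [CommGroup A] [Finite A] (hpA : IsPGroup p A)
    (hA : ∀ S : Set (Subgroup A), (∀ N ∈ S, True) → IsAntichain (· ≤ ·) S → S.ncard ≤ p + 1)
    (hcyc : ¬ IsCyclic A) : Nat.card A = p ^ 2 := by
  have := Fact.mk hp
  have hp1 : ¬ (p : ℤ) ∣ 1 := fun h =>
    hp.one_lt.ne' (by exact_mod_cast Int.eq_one_of_dvd_one (by positivity) h)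
  have hc : ∀ t : A, Subgroup.zpowers t ≠ ⊤ := by
    intro t ht
    exact hcyc ⟨t, fun x => (by rw [ht]; trivial : x ∈ Subgroup.zpowers t)⟩
  have hnt : (⊥ : Subgroup A) ≠ ⊤ := by
    have := hc 1; rwa [Subgroup.zpowers_one_eq_bot] at this
  obtain ⟨χ, hχ, ⟨t0, ht0⟩, -⟩ := frat hp hpA ⊥ hnt
  obtain ⟨μ, t, m, hμ, h1, h2, h3, h4⟩ := basis hp hpA hc χ hχ ⟨t0, by rw [ht0]; exact one_ne_zero⟩
  have hsurj := pair_surj hp hχ hμ h1 h2 h3 h4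
  -- the subgroup of elements killed by p
  let P : A →* A := powMonoidHom p
  have hle : P.range ≤ ((toHom χ hχ).prod (toHom μ hμ)).ker := by
    rintro _ ⟨x, rfl⟩
    rw [MonoidHom.mem_ker, MonoidHom.prod_apply]
    have e1 : χ (x ^ p) = 0 := by rw [h_pow hχ]; simp
    have e2 : μ (x ^ p) = 0 := by rw [h_pow hμ]; simp
    ext
    · exact congrArg Multiplicative.ofAdd e1
    · exact congrArg Multiplicative.ofAdd e2
  have hidx : ((toHom χ hχ).prod (toHom μ hμ)).ker.index = p ^ 2 := by
    rw [Subgroup.index_ker, MonoidHom.range_eq_top.2 hsurj, Subgroup.card_top]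
    simp [sq]
  have hker : p ^ 2 ≤ Nat.card P.ker := by
    have h5 : P.ker.index * Nat.card P.ker = Nat.card A := Subgroup.index_mul_card _
    have h6 : P.range.index * Nat.card P.range = Nat.card A := Subgroup.index_mul_card _
    rw [Subgroup.index_ker] at h5
    have h7 : Nat.card P.ker = P.range.index := by
      have h8 : 0 < Nat.card P.range := Nat.card_pos
      rw [mul_comm] at h6
      exact Nat.eq_of_mul_eq_mul_left h8 (h5.trans h6.symm)
    rw [h7, ← hidx]
    exact Nat.le_of_dvd (Nat.pos_of_ne_zero Subgroup.index_ne_zero_of_finite) (Subgroup.index_dvd_of_le hle)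
  have hmemker : ∀ b : A, b ∈ P.ker ↔ b ^ p = 1 := fun b => Iff.rfl
  -- a family of cyclic subgroups
  have fam : ∀ a b u : A, (∀ i j : Fin p, a * b ^ (i : ℕ) ∈ Subgroup.zpowers (a * b ^ (j : ℕ)) → i = j) →
      (∀ i : Fin p, a * b ^ (i : ℕ) ∉ Subgroup.zpowers b) →
      (∀ i : Fin p, a * b ^ (i : ℕ) ∉ Subgroup.zpowers u) →
      (∀ i : Fin p, b ∉ Subgroup.zpowers (a * b ^ (i : ℕ))) →
      (∀ i : Fin p, u ∉ Subgroup.zpowers (a * b ^ (i : ℕ))) →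
      b ∉ Subgroup.zpowers u → u ∉ Subgroup.zpowers b → False := by
    intro a b u k1 k2 k3 k4 k5 k6 k7
    refine antichain_bound hA (fun o => match o with
      | none => Subgroup.zpowers b
      | some none => Subgroup.zpowers u
      | some (some i) => Subgroup.zpowers (a * b ^ (i : ℕ))) (fun _ => trivial) ?_
    rintro (_ | _ | i) (_ | _ | j) hij <;> simp only [Subgroup.zpowers_le] at hij
    · rfl
    · exact absurd hij k6
    · exact absurd hij (k4 j)
    · exact absurd hij k7
    · rfl
    · exact absurd hij (k5 j)
    · exact absurd hij (k2 i)
    · exact absurd hij (k3 i)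
    · rw [k1 i j hij]
  by_contra hcard
  by_cases hex : ∃ a : A, a ^ p ≠ 1
  · -- an element of order p^2
    obtain ⟨a, ha1, ha2⟩ : ∃ a : A, a ^ p ≠ 1 ∧ a ^ (p ^ 2) = 1 := by
      obtain ⟨a0, ha0⟩ := hex
      obtain ⟨k, hk⟩ := hpA a0
      have hex : ∃ k, a0 ^ p ^ k = 1 := ⟨k, hk⟩
      classical
      have hs := Nat.find_spec hex
      have hm := @Nat.find_min _ _ hex
      set n := Nat.find hex
      have hn0 : n ≠ 0 := by rintro h; rw [h] at hs; simp at hs; simp [hs] at ha0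
      have hn1 : n ≠ 1 := by rintro h; rw [h] at hs; simp at hs; exact ha0 hs
      refine ⟨a0 ^ p ^ (n - 2), ?_, ?_⟩
      · rw [← pow_mul, ← pow_succ]; exact hm (by omega)
      · rw [← pow_mul, ← pow_add]; rw [show n - 2 + 2 = n by omega]; exact hs
    have hao : orderOf a = p ^ 2 := by
      have := orderOf_eq_prime_pow (p := p) (n := 1) (x := a) (by simpa using ha1) ha2
      simpa using this
    have hdvd : ∀ k : ℤ, a ^ k = 1 → (p : ℤ) ^ 2 ∣ k := by
      intro k hk
      rw [← orderOf_dvd_iff_zpow_eq_one, hao] at hk; exact_mod_cast hk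
    obtain ⟨b, hb1, hb2⟩ : ∃ b ∈ P.ker, b ∉ Subgroup.zpowers (a ^ p) := by
      by_contra! hcon
      have : Nat.card P.ker ≤ Nat.card (Subgroup.zpowers (a ^ p)) :=
        Subgroup.card_le_of_le hcon
      rw [Nat.card_zpowers, orderOf_eq_prime (p := p) (by rw [← pow_mul, ← sq]; exact ha2) ha1] at this
      have h9 := hker.trans this
      have := hp.two_le
      nlinarith
    rw [hmemker] at hb1
    have hba : b ∉ Subgroup.zpowers a := by
      rintro ⟨k, hk⟩
      have hk : a ^ k = b := hk
      have h9 := hdvd (k * p) (by rw [zpow_mul, hk, zpow_natCast, hb1])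
      have h10 : (p : ℤ) ∣ k := by
        rw [sq] at h9; exact Int.dvd_of_mul_dvd_mul_right (by exact_mod_cast hp.ne_zero) h9
      obtain ⟨q, rfl⟩ := h10
      apply hb2
      rw [← hk, zpow_mul, zpow_natCast]
      exact ⟨q, rfl⟩
    have hind : ∀ k l : ℤ, a ^ k * b ^ l = 1 → (p : ℤ) ^ 2 ∣ k ∧ (p : ℤ) ∣ l := by
      intro k l hkl
      have hl : (p : ℤ) ∣ l := dvd_of_zpow_mem hp hb1 hba (by
        rw [eq_inv_of_mul_eq_one_right hkl]
        exact inv_mem (Subgroup.zpow_mem_zpowers a k))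
      refine ⟨hdvd k ?_, hl⟩
      obtain ⟨q, rfl⟩ := hl
      rwa [zpow_mul, zpow_natCast, hb1, one_zpow, mul_one] at hkl
    have hind' : ∀ k l k' l' : ℤ, a ^ k * b ^ l = a ^ k' * b ^ l' → (p : ℤ) ^ 2 ∣ k - k' ∧ (p : ℤ) ∣ l - l' := by
      intro k l k' l' he
      apply hind
      rw [zpow_sub, zpow_sub]
      calc a ^ k * (a ^ k')⁻¹ * (b ^ l * (b ^ l')⁻¹) = (a ^ k * b ^ l) * (a ^ k' * b ^ l')⁻¹ := by
            rw [mul_inv]; ac_rfl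
        _ = 1 := by rw [he, mul_inv_cancel]
    have hpp : (p : ℤ) ∣ (p : ℤ) ^ 2 := dvd_pow_self _ two_ne_zero
    have ex1 : ∀ (i : Fin p) (n : ℤ), (a * b ^ (i : ℕ)) ^ n = a ^ n * b ^ ((i : ℤ) * n) := by
      intro i n; rw [mul_zpow, zpow_mul, zpow_natCast]
    have ex2 : ∀ (i : Fin p), a * b ^ (i : ℕ) = a ^ (1 : ℤ) * b ^ (i : ℤ) := by
      intro i; simp
    have ex3 : ∀ n : ℤ, (b * a ^ p) ^ n = a ^ ((p : ℤ) * n) * b ^ n := by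
      intro n; rw [mul_zpow, zpow_mul, zpow_natCast, mul_comm]
    have ex4 : b = a ^ (0 : ℤ) * b ^ (1 : ℤ) := by simp
    have ex5 : ∀ n : ℤ, b ^ n = a ^ (0 : ℤ) * b ^ n := by simp
    have ex6 : b * a ^ p = a ^ (p : ℤ) * b ^ (1 : ℤ) := by simp [mul_comm]
    refine fam a b (b * a ^ p) ?_ ?_ ?_ ?_ ?_ ?_ ?_
    · rintro i j ⟨n, hn⟩
      have hn := ((ex1 j n).symm.trans hn).trans (ex2 i)
      obtain ⟨q1, q2⟩ := hind' _ _ _ _ hn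
      have q3 := (hpp.trans q1).mul_left (j : ℤ)
      exact fin_dvd (by have := dvd_sub q3 q2; ring_nf at this ⊢; simpa [add_comm, sub_eq_add_neg] using this)
    · rintro i ⟨n, hn⟩
      simp only [ex2] at hn
      rw [ex5] at hn
      obtain ⟨q1, q2⟩ := hind' _ _ _ _ hn
      exact hp1 (by simpa using hpp.trans q1)
    · rintro i ⟨n, hn⟩
      simp only [ex2, ex3] at hn
      obtain ⟨q1, q2⟩ := hind' _ _ _ _ hn
      have := dvd_sub (dvd_mul_right (p : ℤ) n) (hpp.trans q1)
      exact hp1 (by simpa using this)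
    · rintro i ⟨n, hn⟩
      simp only [ex1] at hn
      have hn := hn.trans ex4
      obtain ⟨q1, q2⟩ := hind' _ _ _ _ hn
      have := dvd_sub ((hpp.trans q1).mul_left (i : ℤ)) q2
      exact hp1 (by simpa using this)
    · rintro i ⟨n, hn⟩
      simp only [ex1, ex6] at hn
      obtain ⟨q1, q2⟩ := hind' _ _ _ _ hn
      have q3 : (p : ℤ) ∣ n := by simpa using dvd_add (hpp.trans q1) (dvd_refl (p : ℤ))
      have := dvd_sub (q3.mul_left (i : ℤ)) q2
      exact hp1 (by simpa using this)
    · rintro ⟨n, hn⟩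
      simp only [ex3] at hn
      have hn := hn.trans ex4
      obtain ⟨q1, q2⟩ := hind' _ _ _ _ hn
      have q3 : (p : ℤ) ∣ n := by
        rw [sub_zero, sq] at q1
        exact Int.dvd_of_mul_dvd_mul_left (by exact_mod_cast hp.ne_zero) q1
      have := dvd_sub q3 q2
      exact hp1 (by simpa using this)
    · rintro ⟨n, hn⟩
      simp only [ex6] at hn
      rw [ex5] at hn
      obtain ⟨q1, q2⟩ := hind' _ _ _ _ hn
      rw [zero_sub, dvd_neg, sq] at q1
      have := Int.dvd_of_mul_dvd_mul_left (a := (p : ℤ)) (by exact_mod_cast hp.ne_zero) (q1.trans (dvd_of_eq (mul_one _).symm))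
      exact hp1 this
  · push Not at hex
    have hcA : p ^ 2 ≤ Nat.card A := hker.trans (Nat.card_le_card_of_injective _ P.ker.subtype_injective)
    obtain ⟨a, ha⟩ : ∃ a : A, a ≠ 1 := by
      by_contra! hh
      apply hnt; rw [eq_comm, Subgroup.eq_bot_iff_forall]; intro x _; exact hh x
    obtain ⟨b, hb⟩ : ∃ b : A, b ∉ Subgroup.zpowers a := by
      by_contra! hh
      exact hc a ((Subgroup.eq_top_iff' _).2 hh)
    obtain ⟨u, hu⟩ : ∃ u : A, u ∉ Subgroup.zpowers a ⊔ Subgroup.zpowers b := by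
      by_contra! hh
      have h9 : Nat.card (Subgroup.zpowers a ⊔ Subgroup.zpowers b : Subgroup A) = Nat.card A := by
        rw [(Subgroup.eq_top_iff' _).2 hh, Subgroup.card_top]
      have h10 : Function.Surjective (fun x : Subgroup.zpowers a × Subgroup.zpowers b => (x.1 : A) * x.2) := by
        intro y
        obtain ⟨c, hc, d, hd, rfl⟩ := Subgroup.mem_sup.1 (hh y)
        exact ⟨⟨⟨c, hc⟩, ⟨d, hd⟩⟩, rfl⟩
      have h11 := Nat.card_le_card_of_surjective _ h10
      have h12 : ∀ x : A, Nat.card (Subgroup.zpowers x) ≤ p := by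
        intro x; rw [Nat.card_zpowers]; exact Nat.le_of_dvd hp.pos (orderOf_dvd_of_pow_eq_one (hex x))
      rw [Nat.card_prod] at h11
      have := h11.trans (Nat.mul_le_mul (h12 a) (h12 b))
      rw [← sq] at this
      exact hcard (le_antisymm this hcA)
    have hind : ∀ k l r : ℤ, a ^ k * b ^ l * u ^ r = 1 → (p : ℤ) ∣ k ∧ (p : ℤ) ∣ l ∧ (p : ℤ) ∣ r := by
      intro k l r hkl
      have hr : (p : ℤ) ∣ r := dvd_of_zpow_mem hp (hex u) hu (by
        rw [eq_inv_of_mul_eq_one_right hkl]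
        exact inv_mem (Subgroup.mul_mem_sup (Subgroup.zpow_mem_zpowers a k) (Subgroup.zpow_mem_zpowers b l)))
      have hkl' : a ^ k * b ^ l = 1 := by
        obtain ⟨q, rfl⟩ := hr
        rwa [zpow_mul, zpow_natCast, hex, one_zpow, mul_one] at hkl
      have hl : (p : ℤ) ∣ l := dvd_of_zpow_mem hp (hex b) hb (by
        rw [eq_inv_of_mul_eq_one_right hkl']
        exact inv_mem (Subgroup.zpow_mem_zpowers a k))
      have hkl'' : a ^ k = 1 := by
        obtain ⟨q, rfl⟩ := hl
        rwa [zpow_mul, zpow_natCast, hex, one_zpow, mul_one] at hkl'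
      exact ⟨dvd_of_zpow_mem hp (hex a) (H := ⊥) (by simpa using ha) (by simpa using hkl''), hl, hr⟩
    have hind' : ∀ k l r k' l' r' : ℤ, a ^ k * b ^ l * u ^ r = a ^ k' * b ^ l' * u ^ r' →
        (p : ℤ) ∣ k - k' ∧ (p : ℤ) ∣ l - l' ∧ (p : ℤ) ∣ r - r' := by
      intro k l r k' l' r' he
      apply hind
      rw [zpow_sub, zpow_sub, zpow_sub]
      calc a ^ k * (a ^ k')⁻¹ * (b ^ l * (b ^ l')⁻¹) * (u ^ r * (u ^ r')⁻¹) = (a ^ k * b ^ l * u ^ r) * (a ^ k' * b ^ l' * u ^ r')⁻¹ := by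
            rw [mul_inv, mul_inv]; ac_rfl
        _ = 1 := by rw [he, mul_inv_cancel]
    have ex1 : ∀ (i : Fin p) (n : ℤ), (a * b ^ (i : ℕ)) ^ n = a ^ n * b ^ ((i : ℤ) * n) * u ^ (0 : ℤ) := by
      intro i n; rw [mul_zpow, zpow_mul, zpow_natCast]; simp
    have ex2 : ∀ (i : Fin p), a * b ^ (i : ℕ) = a ^ (1 : ℤ) * b ^ (i : ℤ) * u ^ (0 : ℤ) := by
      intro i; simp
    have ex4 : b = a ^ (0 : ℤ) * b ^ (1 : ℤ) * u ^ (0 : ℤ) := by simp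
    have ex5 : ∀ n : ℤ, b ^ n = a ^ (0 : ℤ) * b ^ n * u ^ (0 : ℤ) := by simp
    have ex6 : u = a ^ (0 : ℤ) * b ^ (0 : ℤ) * u ^ (1 : ℤ) := by simp
    have ex7 : ∀ n : ℤ, u ^ n = a ^ (0 : ℤ) * b ^ (0 : ℤ) * u ^ n := by simp
    refine fam a b u ?_ ?_ ?_ ?_ ?_ ?_ ?_
    · rintro i j ⟨n, hn⟩
      have hn := ((ex1 j n).symm.trans hn).trans (ex2 i)
      obtain ⟨q1, q2, -⟩ := hind' _ _ _ _ _ _ hn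
      have q3 := q1.mul_left (j : ℤ)
      exact fin_dvd (by have := dvd_sub q3 q2; ring_nf at this ⊢; simpa [add_comm, sub_eq_add_neg] using this)
    · rintro i ⟨n, hn⟩
      have hn := ((ex5 n).symm.trans hn).trans (ex2 i)
      obtain ⟨q1, -, -⟩ := hind' _ _ _ _ _ _ hn
      exact hp1 (by simpa using q1)
    · rintro i ⟨n, hn⟩
      have hn := ((ex7 n).symm.trans hn).trans (ex2 i)
      obtain ⟨q1, -, -⟩ := hind' _ _ _ _ _ _ hn
      exact hp1 (by simpa using q1)
    · rintro i ⟨n, hn⟩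
      have hn := ((ex1 i n).symm.trans hn).trans ex4
      obtain ⟨q1, q2, -⟩ := hind' _ _ _ _ _ _ hn
      have := dvd_sub (q1.mul_left (i : ℤ)) q2
      exact hp1 (by simpa using this)
    · rintro i ⟨n, hn⟩
      have hn := ((ex1 i n).symm.trans hn).trans ex6
      obtain ⟨-, -, q2⟩ := hind' _ _ _ _ _ _ hn
      exact hp1 (by simpa using q2)
    · rintro ⟨n, hn⟩
      have hn := ((ex7 n).symm.trans hn).trans ex4
      obtain ⟨-, q2, -⟩ := hind' _ _ _ _ _ _ hn
      exact hp1 (by simpa using q2)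
    · rintro ⟨n, hn⟩
      have hn := ((ex5 n).symm.trans hn).trans ex6
      obtain ⟨-, -, q2⟩ := hind' _ _ _ _ _ _ hn
      exact hp1 (by simpa using q2)

theorem center_thin {p : ℕ} (hp : p.Prime) {G : Type*} [Group G] [Finite G] (hpG : IsPGroup p G)
    (hthin : IsThinPGroup p G) (N : Subgroup G) [N.Normal]
    (hc : ¬ IsCyclic (Subgroup.center (G ⧸ N))) : Nat.card (Subgroup.center (G ⧸ N)) = p ^ 2 := by
  letI : CommGroup (Subgroup.center (G ⧸ N)) :=
    { (inferInstance : Group (Subgroup.center (G ⧸ N))) with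
      mul_comm := fun a b => Subtype.ext (Subgroup.mem_center_iff.1 b.2 a) }
  refine core hp ((hpG.to_quotient N).to_subgroup _) ?_ hc
  intro S _ hS
  let f : Subgroup (Subgroup.center (G ⧸ N)) → Subgroup G := fun K =>
    (K.map (Subgroup.center (G ⧸ N)).subtype).comap (QuotientGroup.mk' N)
  have hle : ∀ K K', f K ≤ f K' → K ≤ K' := by
    intro K K' h
    rw [Subgroup.comap_le_comap_of_surjective (QuotientGroup.mk'_surjective N)] at h
    exact (Subgroup.map_le_map_iff_of_injective (Subgroup.subtype_injective _)).1 h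
  have hinj : Function.Injective f := fun K K' h => le_antisymm (hle _ _ h.le) (hle _ _ h.ge)
  have := hthin (f '' S) ?_ ?_
  · rwa [Set.ncard_image_of_injective _ hinj] at this
  · rintro _ ⟨K, -, rfl⟩
    refine Subgroup.Normal.comap ?_ _
    constructor
    rintro _ ⟨k, hk, rfl⟩ g
    have := Subgroup.mem_center_iff.1 k.2 g
    have e : g * (Subgroup.center (G ⧸ N)).subtype k * g⁻¹ = (Subgroup.center (G ⧸ N)).subtype k := by
      simp only [Subgroup.subtype_apply]
      rw [this]; group
    rw [e]; exact ⟨k, hk, rfl⟩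
  · rintro _ ⟨K, hK, rfl⟩ _ ⟨K', hK', rfl⟩ hne h
    exact hS hK hK' (fun e => hne (by rw [e])) (hle _ _ h)

end ThinP

namespace ThinP

/-- `a` is central modulo `N`. -/
def Cen {G : Type*} [Group G] (N : Subgroup G) (a : G) : Prop := ∀ x, x⁻¹ * (a⁻¹ * x * a) ∈ N

theorem Cen.mem {G : Type*} [Group G] {N : Subgroup G} [N.Normal] {a : G} (h : Cen N a) :
    (a : G ⧸ N) ∈ Subgroup.center (G ⧸ N) := by
  rw [Subgroup.mem_center_iff]
  intro g
  obtain ⟨x, rfl⟩ := QuotientGroup.mk_surjective g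
  have := (QuotientGroup.eq_one_iff (N := N) _).2 (h x)
  simp only [QuotientGroup.mk_mul, QuotientGroup.mk_inv] at this
  rw [inv_mul_eq_one] at this
  conv_rhs => rw [this]
  group

theorem two_nc {p : ℕ} (hp : p.Prime) {G : Type*} [Group G]
    {N : Subgroup G} [N.Normal] {a b : G}
    (ha : Cen N a) (hb : Cen N b) (h : ∀ i j : ℤ, a ^ i * b ^ j ∈ N → (p : ℤ) ∣ i ∧ (p : ℤ) ∣ j) :
    ¬ IsCyclic (Subgroup.center (G ⧸ N)) := by
  refine not_cyclic hp (x := (⟨_, ha.mem⟩ : Subgroup.center (G ⧸ N))) (y := ⟨_, hb.mem⟩) ?_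
  intro i j hij
  apply h
  rw [← QuotientGroup.eq_one_iff]
  simpa using congrArg Subtype.val hij

theorem two_pow {p : ℕ} (hp : p.Prime) {G : Type*} [Group G] [Finite G] (hpG : IsPGroup p G)
    (hthin : IsThinPGroup p G) {N : Subgroup G} [N.Normal] {a b : G}
    (ha : Cen N a) (hb : Cen N b) (h : ∀ i j : ℤ, a ^ i * b ^ j ∈ N → (p : ℤ) ∣ i ∧ (p : ℤ) ∣ j)
    {w : G} (hw : Cen N w) : w ^ p ∈ N := by
  have hc := two_nc hp ha hb h
  have hcard := center_thin hp hpG hthin N hc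
  let W : Subgroup.center (G ⧸ N) := ⟨_, hw.mem⟩
  have h1 : orderOf W ∣ p ^ 2 := hcard ▸ orderOf_dvd_natCard W
  obtain ⟨k, hk, hk'⟩ := (Nat.dvd_prime_pow hp).1 h1
  have : k ≤ 1 := by
    by_contra h2
    have : k = 2 := by omega
    subst this
    exact hc (isCyclic_of_orderOf_eq_card W (by rw [hk', hcard]))
  have h3 : W ^ p = 1 := by
    apply orderOf_dvd_iff_pow_eq_one.1
    rw [hk']
    conv_rhs => rw [← pow_one p]
    exact pow_dvd_pow p this
  rw [← QuotientGroup.eq_one_iff]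
  simpa [W] using congrArg Subtype.val h3

theorem three_false {p : ℕ} (hp : p.Prime) {G : Type*} [Group G] [Finite G] (hpG : IsPGroup p G)
    (hthin : IsThinPGroup p G) {N : Subgroup G} [N.Normal] {a b w : G}
    (ha : Cen N a) (hb : Cen N b) (hw : Cen N w)
    (h : ∀ i j k : ℤ, a ^ i * b ^ j * w ^ k ∈ N → (p : ℤ) ∣ i ∧ (p : ℤ) ∣ j ∧ (p : ℤ) ∣ k) :
    False := by
  have hc := two_nc hp ha hb (fun i j hij => by
    have := h i j 0 (by simpa using hij)
    exact ⟨this.1, this.2.1⟩)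
  have hcard := center_thin hp hpG hthin N hc
  let _ : CommGroup (Subgroup.center (G ⧸ N)) :=
    { (inferInstance : Group (Subgroup.center (G ⧸ N))) with
      mul_comm := fun a b => Subtype.ext (Subgroup.mem_center_iff.1 b.2 a) }
  have := card_ge (p := p) (x := (⟨_, ha.mem⟩ : Subgroup.center (G ⧸ N))) (y := ⟨_, hb.mem⟩)
    (w := ⟨_, hw.mem⟩) (fun i j k hijk => by
      apply h
      rw [← QuotientGroup.eq_one_iff]
      simpa using congrArg Subtype.val hijk)
  rw [hcard] at this
  exact absurd this (not_le.2 (Nat.pow_lt_pow_right hp.one_lt (by norm_num)))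

theorem zp_ne {G : Type*} [Group G] (hna : ¬ ∀ a b : G, a * b = b * a) (t : G) :
    Subgroup.zpowers t ≠ ⊤ := by
  intro h
  apply hna
  intro a b
  obtain ⟨i, rfl⟩ := Subgroup.mem_zpowers_iff.1 (h ▸ Subgroup.mem_top a : a ∈ Subgroup.zpowers t)
  obtain ⟨j, rfl⟩ := Subgroup.mem_zpowers_iff.1 (h ▸ Subgroup.mem_top b : b ∈ Subgroup.zpowers t)
  exact Commute.zpow_zpow_self t i j

theorem card_ab {p : ℕ} (hp : p.Prime) {G : Type*} [Group G] [Finite G] (hpG : IsPGroup p G)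
    (hthin : IsThinPGroup p G) (hna : ¬ ∀ a b : G, a * b = b * a) :
    (commutator G).index = p ^ 2 := by
  have hct : Subgroup.center (G ⧸ commutator G) = ⊤ := by
    rw [eq_top_iff]
    intro a _
    rw [Subgroup.mem_center_iff]
    intro b
    exact mul_comm (G := Abelianization G) b a
  have hcard := center_thin hp hpG hthin (commutator G) (by
    rintro ⟨⟨e, _⟩, he⟩
    obtain ⟨x, rfl⟩ := QuotientGroup.mk_surjective e
    obtain ⟨χ, hχ, ⟨t, ht⟩, hk⟩ := frat hp hpG _ (zp_ne hna x)
    obtain ⟨i, hi⟩ := he ⟨(t : G ⧸ commutator G), by rw [hct]; trivial⟩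
    have hi' := congrArg Subtype.val hi
    simp only [SubgroupClass.coe_zpow] at hi'
    rw [← QuotientGroup.mk_zpow, QuotientGroup.eq] at hi'
    have h2 := h_comm hχ hi'
    rw [hχ, ht, hk _ (Subgroup.inv_mem _ (Subgroup.zpow_mem_zpowers x i))] at h2
    have : Fact p.Prime := ⟨hp⟩
    simp at h2)
  rw [hct] at hcard
  rw [Subgroup.index, ← hcard]
  exact (Nat.card_congr (Subgroup.topEquiv.toEquiv)).symm

/-- dual basis -/
structure Bas (p : ℕ) {G : Type*} [Group G] (χ μ : G → ZMod p) (t m : G) : Prop where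
  hχ : ∀ x y, χ (x * y) = χ x + χ y
  hμ : ∀ x y, μ (x * y) = μ x + μ y
  ct : χ t = 1
  cm : χ m = 0
  ut : μ t = 0
  um : μ m = 1

theorem Bas.ker {p : ℕ} (hp : p.Prime) {G : Type*} [Group G] [Finite G] (hpG : IsPGroup p G)
    (hthin : IsThinPGroup p G) (hna : ¬ ∀ a b : G, a * b = b * a) {χ μ : G → ZMod p} {t m : G}
    (B : Bas p χ μ t m) {x : G} (h1 : χ x = 0) (h2 : μ x = 0) : x ∈ commutator G := by
  have hs := pair_surj hp B.hχ B.hμ B.ct B.cm B.ut B.um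
  set f := (toHom χ B.hχ).prod (toHom μ B.hμ)
  have : NeZero p := ⟨hp.ne_zero⟩
  have hi : f.ker.index = p ^ 2 := by
    rw [Subgroup.index_ker, MonoidHom.range_eq_top.2 hs]
    rw [Nat.card_congr (Subgroup.topEquiv.toEquiv), Nat.card_prod]
    simp [sq]
  have hle : commutator G ≤ f.ker := Abelianization.commutator_subset_ker f
  have h3 := Subgroup.relIndex_mul_index hle
  rw [hi, card_ab hp hpG hthin hna] at h3
  have h4 : (commutator G).relIndex f.ker = 1 :=
    Nat.eq_of_mul_eq_mul_right (pow_pos hp.pos 2) (by rw [h3, one_mul])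
  rw [Subgroup.relIndex_eq_one] at h4
  apply h4
  rw [MonoidHom.mem_ker, MonoidHom.prod_apply, Prod.mk_eq_one]
  exact ⟨(toHom_ker B.hχ).2 h1, (toHom_ker B.hμ).2 h2⟩

theorem Bas.dec {p : ℕ} (hp : p.Prime) {G : Type*} [Group G] [Finite G] (hpG : IsPGroup p G)
    (hthin : IsThinPGroup p G) (hna : ¬ ∀ a b : G, a * b = b * a) {χ μ : G → ZMod p} {t m : G}
    (B : Bas p χ μ t m) (x : G) :
    ∃ d ∈ commutator G, x = t ^ (χ x).val * m ^ (μ x).val * d := by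
  have : NeZero p := ⟨hp.ne_zero⟩
  refine ⟨(t ^ (χ x).val * m ^ (μ x).val)⁻¹ * x, B.ker hp hpG hthin hna ?_ ?_, by group⟩
  · rw [B.hχ, h_inv B.hχ, B.hχ, h_pow B.hχ, h_pow B.hχ, B.ct, B.cm]; simp
  · rw [B.hμ, h_inv B.hμ, B.hμ, h_pow B.hμ, h_pow B.hμ, B.ut, B.um]; simp

theorem Bas.powmem {p : ℕ} (hp : p.Prime) {G : Type*} [Group G] [Finite G] (hpG : IsPGroup p G)
    (hthin : IsThinPGroup p G) (hna : ¬ ∀ a b : G, a * b = b * a) {χ μ : G → ZMod p} {t m : G}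
    (B : Bas p χ μ t m) (x : G) : x ^ p ∈ commutator G :=
  B.ker hp hpG hthin hna (by rw [h_pow B.hχ]; simp) (by rw [h_pow B.hμ]; simp)

/-- third term of the lower central series -/
abbrev g3 (G : Type*) [Group G] : Subgroup G := ⁅commutator G, (⊤ : Subgroup G)⁆

theorem com_mod {G : Type*} [Group G] {L : Subgroup G} [L.Normal] (hL : g3 G ≤ L) {d : G}
    (hd : d ∈ commutator G) (x : G) : (d : G ⧸ L) * x = x * d := by
  have := hL (Subgroup.commutator_mem_commutator hd (Subgroup.mem_top x))
  rw [← QuotientGroup.eq_one_iff, commutatorElement_def] at this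
  simp only [QuotientGroup.mk_mul, QuotientGroup.mk_inv] at this
  rw [← commutatorElement_def, commutatorElement_eq_one_iff_mul_comm] at this
  exact this

theorem cen_mod {G : Type*} [Group G] {L : Subgroup G} [L.Normal] (hL : g3 G ≤ L) {t m a : G}
    (hdec : ∀ x : G, ∃ i j : ℕ, ∃ d ∈ commutator G, x = t ^ i * m ^ j * d)
    (h1 : Commute (a : G ⧸ L) t) (h2 : Commute (a : G ⧸ L) m) (x : G) :
    Commute (a : G ⧸ L) x := by
  obtain ⟨i, j, d, hd, rfl⟩ := hdec x
  simp only [QuotientGroup.mk_mul, QuotientGroup.mk_pow]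
  exact ((h1.pow_right i).mul_right (h2.pow_right j)).mul_right (com_mod hL hd a).symm

theorem gen_mod {G : Type*} [Group G] {L : Subgroup G} [L.Normal] (hL : g3 G ≤ L) {t m : G}
    (hdec : ∀ x : G, ∃ i j : ℕ, ∃ d ∈ commutator G, x = t ^ i * m ^ j * d)
    (h : Commute (t : G ⧸ L) m) : commutator G ≤ L := by
  have ht := cen_mod hL hdec (Commute.refl _) h
  have hm := cen_mod hL hdec h.symm (Commute.refl _)
  rw [commutator_def, Subgroup.commutator_le]
  intro x _ y _
  have := cen_mod hL hdec (ht x).symm (hm x).symm y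
  rw [← QuotientGroup.eq_one_iff, commutatorElement_def]
  simp only [QuotientGroup.mk_mul, QuotientGroup.mk_inv]
  rw [← commutatorElement_def, commutatorElement_eq_one_iff_mul_comm]
  exact this

theorem cpow {Q : Type*} [Group Q] {t m c : Q} (h : m * t = t * m * c) (ht : Commute c t)
    (hm : Commute c m) (i j : ℕ) : m ^ j * t ^ i = t ^ i * m ^ j * c ^ (j * i) := by
  have h1 : ∀ j : ℕ, m ^ j * t = t * m ^ j * c ^ j := by
    intro j
    induction j with
    | zero => simp
    | succ j ih =>
      calc m ^ (j + 1) * t = m ^ j * (m * t) := by rw [pow_succ]; group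
        _ = (m ^ j * t) * m * c := by rw [h]; group
        _ = t * m ^ j * (c ^ j * m) * c := by rw [ih]; group
        _ = t * m ^ (j + 1) * c ^ (j + 1) := by
          rw [(hm.pow_left j).eq, pow_succ, pow_succ]; group
  induction i with
  | zero => simp
  | succ i ih =>
    calc m ^ j * t ^ (i + 1) = (m ^ j * t ^ i) * t := by rw [pow_succ]; group
      _ = t ^ i * m ^ j * (c ^ (j * i) * t) := by rw [ih]; group
      _ = t ^ i * (m ^ j * t) * c ^ (j * i) := by rw [(ht.pow_left _).eq]; group
      _ = t ^ (i + 1) * m ^ j * (c ^ j * c ^ (j * i)) := by rw [h1, pow_succ]; group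
      _ = _ := by rw [← pow_add]; congr 2; ring

/-- facts modulo the third term -/
structure Str (p : ℕ) {G : Type*} [Group G] (χ μ : G → ZMod p) (t m c : G) : Prop
    extends Bas p χ μ t m where
  rel : m * t = t * m * c
  cmem : c ∈ commutator G
  cp : (c : G ⧸ g3 G) ^ p = 1
  cne : (c : G ⧸ g3 G) ≠ 1
  gen : ∀ d ∈ commutator G, ∃ k : ℕ, (d : G ⧸ g3 G) = (c : G ⧸ g3 G) ^ k
  kerc : ∀ x, χ x = 0 → μ x = 0 → x ∈ commutator G
  dec : ∀ x : G, ∃ d ∈ commutator G, x = t ^ (χ x).val * m ^ (μ x).val * d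
  powmem : ∀ x : G, x ^ p ∈ commutator G
  gle : ∀ (L : Subgroup G) [L.Normal], g3 G ≤ L → c ∈ L → commutator G ≤ L

theorem Bas.str {p : ℕ} (hp : p.Prime) {G : Type*} [Group G] [Finite G] (hpG : IsPGroup p G)
    (hthin : IsThinPGroup p G) (hna : ¬ ∀ a b : G, a * b = b * a) {χ μ : G → ZMod p} {t m : G}
    (B : Bas p χ μ t m) : ∃ c, Str p χ μ t m c := by
  have : Fact p.Prime := ⟨hp⟩
  have : Group.IsNilpotent G := hpG.isNilpotent
  obtain ⟨c, hc⟩ : ∃ c, c = (t * m)⁻¹ * (m * t) := ⟨_, rfl⟩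
  have rel : m * t = t * m * c := by rw [hc]; group
  have cmem : c ∈ commutator G := by
    have : c = ⁅m⁻¹, t⁻¹⁆ := by rw [hc, commutatorElement_def]; group
    rw [this]; exact Subgroup.commutator_mem_commutator trivial trivial
  have dec := B.dec hp hpG hthin hna
  have hdec : ∀ x : G, ∃ i j : ℕ, ∃ d ∈ commutator G, x = t ^ i * m ^ j * d :=
    fun x => ⟨_, _, dec x⟩
  have pm := B.powmem hp hpG hthin hna
  have gle : ∀ (L : Subgroup G) [L.Normal], g3 G ≤ L → c ∈ L → commutator G ≤ L := by
    intro L _ hL hcL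
    apply gen_mod hL hdec
    rw [Commute, SemiconjBy, ← QuotientGroup.mk_mul, ← QuotientGroup.mk_mul, rel,
      QuotientGroup.mk_mul _ (t * m) c, (QuotientGroup.eq_one_iff _).2 hcL, mul_one]
  have relq : (m : G ⧸ g3 G) * t = t * m * c := by exact_mod_cast congrArg (QuotientGroup.mk (s := g3 G)) rel
  have ccom := com_mod (le_refl (g3 G)) cmem
  refine ⟨c, ⟨B, rel, cmem, ?_, ?_, ?_, fun x => B.ker hp hpG hthin hna, dec, pm, gle⟩⟩
  · have h1 := cpow relq (ccom t) (ccom m) p 1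
    have h2 := com_mod (le_refl (g3 G)) (pm t) m
    rw [QuotientGroup.mk_pow] at h2
    rw [pow_one, ← h2, one_mul] at h1
    exact (mul_eq_left.1 h1.symm)
  · intro h
    rw [QuotientGroup.eq_one_iff] at h
    have h2 := gle (g3 G) le_rfl h
    have h3 : commutator G ≤ ⊥ := nil_le _ _ (by simpa using h2)
    apply hna
    intro a b
    rw [← commutatorElement_eq_one_iff_mul_comm]
    exact h3 (Subgroup.commutator_mem_commutator trivial trivial)
  · intro d hd
    let L := (Subgroup.zpowers (c : G ⧸ g3 G)).comap (QuotientGroup.mk' (g3 G))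
    have : (Subgroup.zpowers (c : G ⧸ g3 G)).Normal := by
      constructor
      intro n hn g
      obtain ⟨k, rfl⟩ := Subgroup.mem_zpowers_iff.1 hn
      obtain ⟨x, rfl⟩ := QuotientGroup.mk_surjective g
      have : Commute (c : G ⧸ g3 G) x := ccom x
      rw [← (this.zpow_left k).eq]; simp
    have : L.Normal := inferInstance
    have h1 : g3 G ≤ L := by
      intro x hx
      rw [Subgroup.mem_comap, QuotientGroup.mk'_apply, (QuotientGroup.eq_one_iff _).2 hx]
      exact Subgroup.one_mem _
    have h2 := gle L h1 (Subgroup.mem_zpowers _) hd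
    rw [Subgroup.mem_comap, QuotientGroup.mk'_apply, ← mem_powers_iff_mem_zpowers] at h2
    obtain ⟨k, hk⟩ := h2
    exact ⟨k, hk.symm⟩

end ThinP

namespace ThinP

theorem exists_z {p : ℕ} (hp : p.Prime) {G : Type*} [Group G] [Finite G] (hpG : IsPGroup p G)
    (M : Subgroup G) [M.Normal] (hM : M ≠ ⊥) :
    ∃ z ∈ M, orderOf z = p ∧ ∀ x, x * z = z * x := by
  have : Fact p.Prime := ⟨hp⟩
  have hA : IsPGroup p (ConjAct G) := hpG
  have : Nontrivial M := (Subgroup.nontrivial_iff_ne_bot M).2 hM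
  have hd : p ∣ Nat.card M := by
    obtain ⟨n, hn, h⟩ := (hpG.to_subgroup M).nontrivial_iff_card.1 this
    rw [h]; exact dvd_pow_self p hn.ne'
  obtain ⟨b, hb, hne⟩ := hA.exists_fixed_point_of_prime_dvd_card_of_fixed_point M hd
    (a := 1) (by intro g; ext; simp)
  have hb2 : ∀ x : G, x * b = b * x := by
    intro x
    have := congrArg Subtype.val (hb (ConjAct.toConjAct x))
    rw [ConjAct.Subgroup.val_conj_smul, ConjAct.smul_def] at this
    simp only [ConjAct.ofConjAct_toConjAct] at this
    exact (mul_inv_eq_iff_eq_mul.1 this)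
  let W := M ⊓ Subgroup.center G
  have hW : Nontrivial W := ⟨⟨b, b.2, Subgroup.mem_center_iff.2 hb2⟩, 1, fun h => hne (by
    ext; exact (congrArg Subtype.val h).symm)⟩
  have hd : p ∣ Nat.card W := by
    obtain ⟨n, hn, h⟩ := (hpG.to_subgroup W).nontrivial_iff_card.1 hW
    rw [h]; exact dvd_pow_self p hn.ne'
  obtain ⟨z, hz⟩ := exists_prime_orderOf_dvd_card' p hd
  exact ⟨z, z.2.1, by rw [Subgroup.orderOf_coe, hz], Subgroup.mem_center_iff.1 z.2.2⟩

/-- conjugation by `w` multiplies by a power of `z` -/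
def Cj {p : ℕ} {G : Type*} [Group G] (z : G) (f : G → ZMod p) (w : G) : Prop :=
  ∀ x, w⁻¹ * x * w = x * z ^ (f x).val

section
variable {p : ℕ} [Fact p.Prime] {G : Type*} [Group G] {z : G} {f f' : G → ZMod p} {w w' : G}

theorem Cj.mul (hz : z ^ p = 1) (hzc : ∀ x, x * z = z * x) (h : Cj z f w) (h' : Cj z f' w') :
    Cj z (fun x => f x + f' x) (w * w') := by
  intro x
  have hc : Commute w' z := hzc w'
  calc (w * w')⁻¹ * x * (w * w') = w'⁻¹ * (w⁻¹ * x * w) * w' := by group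
    _ = w'⁻¹ * x * (z ^ (f x).val * w') := by rw [h x]; group
    _ = w'⁻¹ * x * w' * z ^ (f x).val := by rw [← (hc.pow_right _).eq]; group
    _ = x * z ^ (f x + f' x).val := by rw [h' x, add_comm, pv_add hz]; group

theorem Cj.inv (hz : z ^ p = 1) (hzc : ∀ x, x * z = z * x) (h : Cj z f w) :
    Cj z (fun x => - f x) w⁻¹ := by
  intro x
  have hc : Commute w z := hzc w
  have h1 : z ^ (f x).val * z ^ (-f x).val = 1 := by
    rw [← pv_add hz]; simp
  calc w⁻¹⁻¹ * x * w⁻¹ = w * (x * z ^ (f x).val) * z ^ (- f x).val * w⁻¹ := by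
        rw [← mul_assoc w x, mul_assoc (w * x), h1]; group
    _ = w * (w⁻¹ * x * w) * z ^ (- f x).val * w⁻¹ := by rw [h x]
    _ = x * (w * z ^ (- f x).val) * w⁻¹ := by group
    _ = _ := by rw [(hc.pow_right _).eq]; group

theorem Cj.zpow (hz : z ^ p = 1) (hzc : ∀ x, x * z = z * x) (h : Cj z f w) (n : ℤ) :
    Cj z (fun x => (n : ZMod p) * f x) (w ^ n) := by
  induction n using Int.induction_on with
  | zero => intro x; simp
  | succ n ih =>
    rw [zpow_add_one]
    have := ih.mul hz hzc h
    intro x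
    rw [this x]; congr 3; push_cast; ring
  | pred n ih =>
    rw [zpow_sub_one]
    have := ih.mul hz hzc (h.inv hz hzc)
    intro x
    rw [this x]; congr 3; push_cast; ring

theorem Cj.comb (hz : z ^ p = 1) (hzc : ∀ x, x * z = z * x) (h : Cj z f w) (h' : Cj z f' w')
    (i j : ℤ) : Cj z (fun x => (i : ZMod p) * f x + (j : ZMod p) * f' x) (w ^ i * w' ^ j) :=
  (h.zpow hz hzc i).mul hz hzc (h'.zpow hz hzc j)

theorem Cj.eq_zero (hz : orderOf z = p) (h : Cj z f w) {x : G} (hx : x * w = w * x) : f x = 0 := by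
  apply pv_eq_one hz
  have := h x
  rw [mul_assoc, hx] at this
  simpa using this.symm

theorem Cj.cen {N : Subgroup G} (hN : z ∈ N) (h : Cj z f w) : Cen N w := by
  intro x
  rw [h x, inv_mul_cancel_left]
  exact N.pow_mem hN _

theorem Cj.indep (hz : orderOf z = p) (hzc : ∀ x, x * z = z * x) {t m : G}
    (B : Bas p f f' t m) (h : Cj z f w) (h' : Cj z f' w')
    (i j : ℤ) (hij : ∀ x, x * (w ^ i * w' ^ j) = w ^ i * w' ^ j * x) :
    (p : ℤ) ∣ i ∧ (p : ℤ) ∣ j := by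
  have hz1 : z ^ p = 1 := by rw [← hz]; exact pow_orderOf_eq_one z
  have h1 := (h.comb hz1 hzc h' i j).eq_zero hz (hij t)
  have h2 := (h.comb hz1 hzc h' i j).eq_zero hz (hij m)
  simp only [B.ct, B.cm, B.ut, B.um] at h1 h2
  simp at h1 h2
  exact ⟨(ZMod.intCast_zmod_eq_zero_iff_dvd _ _).1 h1, (ZMod.intCast_zmod_eq_zero_iff_dvd _ _).1 h2⟩
end

theorem w_of {p : ℕ} (hp : p.Prime) {G : Type*} [Group G] [Finite G]
    (hno : ∀ φ : MulAut G, orderOf φ = p → ∃ g, ∀ x, φ x = g⁻¹ * x * g)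
    {z : G} (hz : z ^ p = 1) (hzc : ∀ x, x * z = z * x) {β : G → ZMod p}
    (hβ : ∀ x y, β (x * y) = β x + β y) (hβz : β z = 0) : ∃ w, Cj z β w := by
  obtain ⟨h, hh⟩ := inner_of hp hno (z := z) (g := 1) hz (one_pow p) hzc (χ := fun _ => 0)
    (α := fun _ => 0) (β := β) (by simp) (by simp) (by simpa using hβ) rfl rfl (h_one hβ) hβz
  exact ⟨h, fun x => by simpa using hh x⟩

theorem zp_normal {G : Type*} [Group G] {z : G} (hzc : ∀ x, x * z = z * x) :
    (Subgroup.zpowers z).Normal := by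
  constructor
  intro n hn g
  obtain ⟨k, rfl⟩ := Subgroup.mem_zpowers_iff.1 hn
  have : Commute g z := hzc g
  rw [(this.zpow_right k).eq]; simp

theorem Str.in_comm {p : ℕ} (hp : p.Prime) {G : Type*} [Group G] {χ μ : G → ZMod p} {t m c w : G}
    (S : Str p χ μ t m c) (hw : Cen (g3 G) w) : w ∈ commutator G := by
  have : Fact p.Prime := ⟨hp⟩
  have relq : (m : G ⧸ g3 G) * t = t * m * c := by
    exact_mod_cast congrArg (QuotientGroup.mk (s := g3 G)) S.rel
  have ccom := com_mod (le_refl (g3 G)) S.cmem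
  have oc : orderOf (c : G ⧸ g3 G) = p := orderOf_eq_prime S.cp S.cne
  obtain ⟨d, hd, e⟩ := S.dec w
  have hwc := Subgroup.mem_center_iff.1 hw.mem
  have hdc : ∀ x : G, Commute (d : G ⧸ g3 G) x := com_mod (le_refl (g3 G)) hd
  have e' : (w : G ⧸ g3 G) = t ^ (χ w).val * m ^ (μ w).val * d := by
    exact_mod_cast congrArg (QuotientGroup.mk (s := g3 G)) e
  apply S.kerc
  · apply pv_eq_one oc
    have h1 := hwc m
    have h2 := cpow relq (ccom t) (ccom m) (χ w).val 1
    simp only [pow_one, one_mul] at h2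
    rw [e'] at h1
    have : (m : G ⧸ g3 G) * t ^ (χ w).val = t ^ (χ w).val * m := by
      have h3 : (m : G ⧸ g3 G) * t ^ (χ w).val * (m ^ (μ w).val * d) = t ^ (χ w).val * m * (m ^ (μ w).val * d) := by
        calc _ = (m : G ⧸ g3 G) * (t ^ (χ w).val * m ^ (μ w).val * d) := by group
          _ = _ := h1
          _ = (t : G ⧸ g3 G) ^ (χ w).val * m ^ (μ w).val * (d * m) := by group
          _ = (t : G ⧸ g3 G) ^ (χ w).val * (m ^ (μ w).val * m) * d := by rw [(hdc m).eq]; group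
          _ = _ := by rw [← pow_succ, pow_succ']; group
      exact mul_right_cancel h3
    rw [this] at h2
    exact mul_eq_left.1 h2.symm
  · apply pv_eq_one oc
    have h1 := hwc t
    have h2 := cpow relq (ccom t) (ccom m) 1 (μ w).val
    simp only [pow_one, mul_one] at h2
    rw [e'] at h1
    have : (m : G ⧸ g3 G) ^ (μ w).val * t = t * m ^ (μ w).val := by
      have h3 : (t : G ⧸ g3 G) ^ (χ w).val * (m ^ (μ w).val * t) * d = t ^ (χ w).val * (t * m ^ (μ w).val) * d := by
        calc _ = (t : G ⧸ g3 G) ^ (χ w).val * m ^ (μ w).val * (t * d) := by group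
          _ = (t : G ⧸ g3 G) ^ (χ w).val * m ^ (μ w).val * d * t := by rw [← (hdc t).eq]; group
          _ = _ := h1.symm
          _ = (t * (t : G ⧸ g3 G) ^ (χ w).val) * m ^ (μ w).val * d := by group
          _ = _ := by rw [← pow_succ', pow_succ]; group
      exact mul_left_cancel (mul_right_cancel h3)
    rw [this] at h2
    exact mul_eq_left.1 h2.symm

theorem Str.powE {p : ℕ} (hp : p.Prime) {G : Type*} [Group G] [Finite G] (hpG : IsPGroup p G)
    {χ μ : G → ZMod p} {t m c : G}
    (S : Str p χ μ t m c) {w w' : G} (hw : w ∈ commutator G) (hw' : w' ∈ commutator G)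
    (hi : ∀ i j : ℤ, w ^ i * w' ^ j = 1 → (p : ℤ) ∣ i ∧ (p : ℤ) ∣ j) (x : G) :
    x ^ p ∈ g3 G := by
  by_contra hx
  have : Fact p.Prime := ⟨hp⟩
  have : Group.IsNilpotent G := hpG.isNilpotent
  let M := Subgroup.zpowers x ⊔ commutator G
  have hcM : commutator G ≤ M := le_sup_right
  have hconj : ∀ n ∈ M, ∀ g : G, g * n * g⁻¹ ∈ M := by
    intro n hn g
    have : g * n * g⁻¹ = ⁅g, n⁆ * n := by rw [commutatorElement_def]; group
    rw [this]
    exact M.mul_mem (hcM (Subgroup.commutator_mem_commutator trivial trivial)) hn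
  let T := Subgroup.closure {y : G | ∃ u ∈ M, u ^ p = y}
  have hTn : T.Normal := by
    apply Subgroup.Normal.mk
    intro n hn g
    have hle : T ≤ T.comap (MulAut.conj g).toMonoidHom := by
      refine (Subgroup.closure_le _).2 ?_
      rintro _ ⟨u, hu, rfl⟩
      show g * u ^ p * g⁻¹ ∈ T
      apply Subgroup.subset_closure
      exact ⟨_, hconj u hu g, conj_pow⟩
    exact hle hn
  have hxM : x ∈ M := (le_sup_left : Subgroup.zpowers x ≤ M) (Subgroup.mem_zpowers x)
  have hxT : x ^ p ∈ T := Subgroup.subset_closure ⟨x, hxM, rfl⟩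
  have h1 : commutator G ≤ g3 G ⊔ T := by
    apply S.gle _ le_sup_left
    obtain ⟨k, hk⟩ := S.gen _ (S.powmem x)
    by_contra hc
    have h2 := dvd_of_zpow_mem hp S.cp (b := (c : G ⧸ g3 G)) (H := Subgroup.zpowers (((x ^ p : G) : G ⧸ g3 G)))
      (l := k) (by
        intro h
        obtain ⟨l, hl⟩ := Subgroup.mem_zpowers_iff.1 h
        rw [← QuotientGroup.mk_zpow, QuotientGroup.eq] at hl
        apply hc
        have : c = ((x ^ p) ^ l) * (((x ^ p) ^ l)⁻¹ * c) := by group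
        rw [this]
        exact Subgroup.mul_mem _ ((le_sup_right : T ≤ g3 G ⊔ T) (T.zpow_mem hxT l))
          ((le_sup_left : g3 G ≤ g3 G ⊔ T) hl))
      (by rw [zpow_natCast, ← hk]; exact Subgroup.mem_zpowers _)
    obtain ⟨l, rfl⟩ := Int.natCast_dvd_natCast.1 h2
    rw [pow_mul, S.cp, one_pow, QuotientGroup.eq_one_iff] at hk
    exact hx hk
  have h2 : commutator G ≤ T := nil_le _ _ h1
  by_cases hK : (Subgroup.zpowers x).subgroupOf M = ⊤
  · rw [Subgroup.subgroupOf_eq_top] at hK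
    refine not_cyclic hp (A := Subgroup.zpowers x) (x := ⟨w, hK (hcM hw)⟩) (y := ⟨w', hK (hcM hw')⟩)
      ?_ inferInstance
    intro i j hij
    apply hi
    simpa using congrArg Subtype.val hij
  · obtain ⟨ψ, hψ, ⟨s, hs⟩, hk⟩ := frat hp (hpG.to_subgroup M) _ hK
    have h3 : T ≤ (toHom ψ hψ).ker.map M.subtype := by
      refine (Subgroup.closure_le _).2 ?_
      rintro _ ⟨u, hu, rfl⟩
      refine ⟨⟨u, hu⟩ ^ p, (toHom_ker hψ).2 ?_, rfl⟩
      rw [h_pow hψ]; simp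
    have h4 : M ≤ (toHom ψ hψ).ker.map M.subtype := by
      refine sup_le ?_ (h2.trans h3)
      rw [Subgroup.zpowers_le]
      exact ⟨⟨x, hxM⟩, (toHom_ker hψ).2 (hk _ (Subgroup.mem_zpowers x)), rfl⟩
    obtain ⟨s', h5, h6⟩ := h4 s.2
    have : s' = s := Subtype.ext h6
    subst this
    have := (toHom_ker hψ).1 h5
    rw [hs] at this
    exact one_ne_zero this

theorem Str.two_false {G : Type*} [Group G] {χ μ : G → ZMod 2} {t m c : G}
    (S : Str 2 χ μ t m c) (h : ∀ x : G, x ^ 2 ∈ g3 G) : False := by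
  have h' : ∀ x : G, (x : G ⧸ g3 G) * x = 1 := by
    intro x
    have := (QuotientGroup.eq_one_iff _).2 (h x)
    rwa [QuotientGroup.mk_pow, sq] at this
  have ccom := com_mod (le_refl (g3 G)) S.cmem
  have relq : (m : G ⧸ g3 G) * t = t * m * c := by
    exact_mod_cast congrArg (QuotientGroup.mk (s := g3 G)) S.rel
  apply S.cne
  have h1 := h' (t * m)
  rw [QuotientGroup.mk_mul] at h1
  calc (c : G ⧸ g3 G) = (t * t) * (m * m) * c := by rw [h', h']; simp
    _ = t * (t * m * (m * c)) := by group
    _ = t * (m * t) * m := by rw [relq, ← ccom m]; group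
    _ = t * m * (t * m) := by group
    _ = 1 := h1

theorem pow_form {G : Type*} [Group G] {x y z : G} {e : ℕ} (hzc : ∀ x, x * z = z * x)
    (h : y * x = x * y * z ^ e) (n : ℕ) : (x * y) ^ n = x ^ n * y ^ n * z ^ (e * n.choose 2) := by
  have hc : ∀ (a : G) (k : ℕ), z ^ k * a = a * z ^ k := fun a k =>
    ((show Commute a z from hzc a).pow_right k).eq.symm
  induction n with
  | zero => simp
  | succ n ih =>
    have h1 := cpow h (hc x e) (hc y e) 1 n
    rw [pow_one, mul_one] at h1
    calc (x * y) ^ (n + 1) = x ^ n * y ^ n * (z ^ (e * n.choose 2) * (x * y)) := by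
          rw [pow_succ, ih]; group
      _ = x ^ n * (y ^ n * x) * y * z ^ (e * n.choose 2) := by rw [hc]; group
      _ = x ^ n * x * y ^ n * ((z ^ e) ^ n * y) * z ^ (e * n.choose 2) := by rw [h1]; group
      _ = (x ^ n * x) * (y ^ n * y) * (z ^ (e * n) * z ^ (e * n.choose 2)) := by
        rw [← pow_mul, hc]; group
      _ = _ := by
        rw [← pow_succ, ← pow_succ, ← pow_add]; congr 2
        rw [Nat.choose_succ_succ' n 1]; simp; ring

theorem find_g {p : ℕ} (hp : p.Prime) (hp2 : 2 < p) {G : Type*} [Group G] {z : G}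
    (hz : orderOf z = p) (hzc : ∀ x, x * z = z * x) {χ μ : G → ZMod p} {t m w w' : G}
    (B : Bas p χ μ t m) (h : Cj z χ w) (h' : Cj z μ w')
    (hw : w ^ p ∈ Subgroup.zpowers z) (hw' : w' ^ p ∈ Subgroup.zpowers z) :
    ∃ g, ∃ f : G → ZMod p, (∀ x y, f (x * y) = f x + f y) ∧ (∃ s, f s ≠ 0) ∧ g ^ p = 1 ∧
      Cj z f g ∧ ∃ i j : ℤ, g = w ^ i * w' ^ j := by
  have : Fact p.Prime := ⟨hp⟩
  have hz1 : z ^ p = 1 := by rw [← hz]; exact pow_orderOf_eq_one z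
  by_cases h1 : w ^ p = 1
  · exact ⟨w, χ, B.hχ, ⟨t, by rw [B.ct]; exact one_ne_zero⟩, h1, h, 1, 0, by simp⟩
  obtain ⟨l, hl⟩ := Subgroup.mem_zpowers_iff.1 hw
  have hzw : z ∈ Subgroup.zpowers (w ^ p) := by
    by_contra hc
    have := dvd_of_zpow_mem hp hz1 hc (l := l) (by rw [hl]; exact Subgroup.mem_zpowers _)
    obtain ⟨q, rfl⟩ := this
    apply h1
    rw [← hl, zpow_mul, zpow_natCast, hz1, one_zpow]
  have hw2 : w' ^ p ∈ Subgroup.zpowers (w ^ p) := (Subgroup.zpowers_le.2 hzw) hw'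
  obtain ⟨k, hk⟩ := Subgroup.mem_zpowers_iff.1 hw2
  have hcj := h.comb hz1 hzc h' (-k) 1
  refine ⟨w ^ (-k) * w' ^ (1 : ℤ), _, ?_, ⟨m, ?_⟩, ?_, hcj, -k, 1, rfl⟩
  · intro x y; rw [B.hχ, B.hμ]; ring
  · rw [B.cm, B.um]; simp
  · have h3 := (h.zpow hz1 hzc (-k)) w'
    have h4 : w' * w ^ (-k) = w ^ (-k) * w' * z ^ (((-k : ℤ) : ZMod p) * χ w').val := by
      rw [mul_assoc, ← h3]; group
    rw [zpow_one, pow_form hzc h4]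
    obtain ⟨q, hq⟩ := hp.dvd_choose_self (k := 2) (by norm_num) hp2
    rw [hq, mul_left_comm, pow_mul, hz1, one_pow, mul_one, ← hk, ← zpow_natCast, ← zpow_natCast,
      ← zpow_mul, ← zpow_mul, ← zpow_add]
    ring_nf; simp

end ThinP

namespace ThinP

theorem pv_inj {p : ℕ} [Fact p.Prime] {G : Type*} [Group G] {x : G} (hx : orderOf x = p)
    {a b : ZMod p} (h : x ^ a.val = x ^ b.val) : a = b := by
  have h1 : x ^ p = 1 := by rw [← hx]; exact pow_orderOf_eq_one x
  have h2 := pv_add h1 (a - b) b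
  rw [sub_add_cancel, h] at h2
  exact sub_eq_zero.1 (pv_eq_one hx (mul_eq_right.1 h2.symm))

theorem Str.nu {p : ℕ} (hp : p.Prime) {G : Type*} [Group G] {χ μ : G → ZMod p} {t m c : G}
    (S : Str p χ μ t m c) (hpow : ∀ x : G, x ^ p ∈ g3 G) :
    ∃ ν : G → ZMod p, (∀ x y, ν (x * y) = ν x + ν y + μ x * χ y) ∧ (∀ x ∈ g3 G, ν x = 0) ∧
      ν t = 0 ∧ ν m = 0 := by
  have : Fact p.Prime := ⟨hp⟩
  have relq : (m : G ⧸ g3 G) * t = t * m * c := by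
    exact_mod_cast congrArg (QuotientGroup.mk (s := g3 G)) S.rel
  have ccom := com_mod (le_refl (g3 G)) S.cmem
  have oc : orderOf (c : G ⧸ g3 G) = p := orderOf_eq_prime S.cp S.cne
  have tp : (t : G ⧸ g3 G) ^ p = 1 := by
    rw [← QuotientGroup.mk_pow, QuotientGroup.eq_one_iff]; exact hpow t
  have mp : (m : G ⧸ g3 G) ^ p = 1 := by
    rw [← QuotientGroup.mk_pow, QuotientGroup.eq_one_iff]; exact hpow m
  have hex : ∀ x : G, ∃ n : ZMod p,
      (x : G ⧸ g3 G) = t ^ (χ x).val * m ^ (μ x).val * c ^ n.val := by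
    intro x
    obtain ⟨d, hd, e⟩ := S.dec x
    obtain ⟨k, hk⟩ := S.gen d hd
    refine ⟨(k : ZMod p), ?_⟩
    rw [pv_mod S.cp, ← hk]
    exact_mod_cast congrArg (QuotientGroup.mk (s := g3 G)) e
  choose ν hν using hex
  have v1 : (1 : ZMod p).val = 1 := by
    have : Fact (1 < p) := ⟨hp.one_lt⟩
    exact ZMod.val_one p
  refine ⟨ν, ?_, ?_, ?_, ?_⟩
  · intro x y
    apply pv_inj oc
    have h1 := hν (x * y)
    rw [QuotientGroup.mk_mul, S.hχ, S.hμ, pv_add tp, pv_add mp] at h1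
    have h2 : (x : G ⧸ g3 G) * y = t ^ (χ x).val * t ^ (χ y).val *
        (m ^ (μ x).val * m ^ (μ y).val) * c ^ (ν x + ν y + μ x * χ y).val := by
      rw [hν x, hν y, pv_add S.cp, pv_add S.cp, pv_mul S.cp, ← pow_mul]
      have h3 := cpow relq (ccom t) (ccom m) (χ y).val (μ x).val
      have hct : ∀ a b : ℕ, (c : G ⧸ g3 G) ^ a * t ^ b = t ^ b * c ^ a := fun a b =>
        ((show Commute (c : G ⧸ g3 G) t from ccom t).pow_pow a b).eq
      have hcm : ∀ a b : ℕ, (c : G ⧸ g3 G) ^ a * m ^ b = m ^ b * c ^ a := fun a b =>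
        ((show Commute (c : G ⧸ g3 G) m from ccom m).pow_pow a b).eq
      generalize (χ x).val = a at *
      generalize (χ y).val = a' at *
      generalize (μ x).val = b at *
      generalize (μ y).val = b' at *
      generalize (ν x).val = n at *
      generalize (ν y).val = n' at *
      calc (t : G ⧸ g3 G) ^ a * m ^ b * c ^ n * (t ^ a' * m ^ b' * c ^ n')
          = t ^ a * m ^ b * (c ^ n * t ^ a') * m ^ b' * c ^ n' := by group
        _ = t ^ a * (m ^ b * t ^ a') * (c ^ n * m ^ b') * c ^ n' := by rw [hct]; group
        _ = t ^ a * (t ^ a' * m ^ b) * (c ^ (b * a') * m ^ b') * c ^ n * c ^ n' := by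
            rw [hcm, h3]; group
        _ = t ^ a * t ^ a' * (m ^ b * m ^ b') * (c ^ (b * a') * c ^ n * c ^ n') := by
            rw [hcm]; group
        _ = _ := by
          congr 1
          simp only [← pow_add]; congr 1; ring
    rw [h2] at h1
    exact (mul_left_cancel h1).symm
  · intro x hx
    have h1 := hν x
    have hxc : x ∈ commutator G := Subgroup.commutator_le_left _ _ hx
    rw [(QuotientGroup.eq_one_iff _).2 hx, h_comm S.hχ hxc, h_comm S.hμ hxc] at h1
    simp at h1
    exact pv_eq_one oc h1.symm
  · have h1 := hν t
    rw [S.ct, S.ut, v1] at h1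
    simp at h1
    exact pv_eq_one oc h1
  · have h1 := hν m
    rw [S.cm, S.um, v1] at h1
    simp at h1
    exact pv_eq_one oc h1

theorem conj_zp {G : Type*} [Group G] {h t u : G} (e : h⁻¹ * t * h = t * u) (hc : Commute h u)
    (i : ℤ) : (h ^ i)⁻¹ * t * h ^ i = t * u ^ i := by
  have h1 : t⁻¹ * h⁻¹ * t = u * h⁻¹ := by
    calc t⁻¹ * h⁻¹ * t = t⁻¹ * (h⁻¹ * t * h) * h⁻¹ := by group
      _ = _ := by rw [e]; group
  have h2 : t⁻¹ * (h⁻¹) ^ i * t = u ^ i * (h⁻¹) ^ i := by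
    rw [← (hc.symm.inv_right).mul_zpow, ← h1]
    have := conj_zpow (a := t⁻¹) (b := h⁻¹) (i := i)
    rw [inv_inv] at this
    exact this.symm
  calc (h ^ i)⁻¹ * t * h ^ i = t * (t⁻¹ * (h⁻¹) ^ i * t) * h ^ i := by rw [inv_zpow]; group
    _ = _ := by rw [h2, inv_zpow]; group

theorem start {p : ℕ} (hp : p.Prime) {G : Type*} [Group G] [Finite G] (hpG : IsPGroup p G)
    (hthin : IsThinPGroup p G) (hna : ¬ ∀ a b : G, a * b = b * a)
    (hno : ∀ φ : MulAut G, orderOf φ = p → ∃ g, ∀ x, φ x = g⁻¹ * x * g)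
    {z : G} (hz : orderOf z = p) (hzc : ∀ x, x * z = z * x) (hz2 : z ∈ commutator G) :
    ∃ χ μ : G → ZMod p, ∃ t m c w w', Str p χ μ t m c ∧ Cj z χ w ∧ Cj z μ w' ∧
      w ^ p ∈ Subgroup.zpowers z ∧ w' ^ p ∈ Subgroup.zpowers z := by
  have : Fact p.Prime := ⟨hp⟩
  have hz1 : z ^ p = 1 := by rw [← hz]; exact pow_orderOf_eq_one z
  obtain ⟨χ, hχ, ⟨s, hs⟩, -⟩ := frat hp hpG _ (zp_ne hna 1)
  obtain ⟨μ, t, m, hμ, a1, a2, a3, a4⟩ := basis hp hpG (zp_ne hna) χ hχ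
    ⟨s, by rw [hs]; exact one_ne_zero⟩
  have B : Bas p χ μ t m := ⟨hχ, hμ, a1, a2, a3, a4⟩
  obtain ⟨c, S⟩ := B.str hp hpG hthin hna
  obtain ⟨w, hw⟩ := w_of hp hno hz1 hzc hχ (h_comm hχ hz2)
  obtain ⟨w', hw'⟩ := w_of hp hno hz1 hzc hμ (h_comm hμ hz2)
  have := zp_normal hzc
  have hN := Subgroup.mem_zpowers z
  have hi : ∀ i j : ℤ, w ^ i * w' ^ j ∈ Subgroup.zpowers z → (p : ℤ) ∣ i ∧ (p : ℤ) ∣ j := by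
    intro i j hij
    apply hw.indep hz hzc B hw'
    intro x
    obtain ⟨k, hk⟩ := Subgroup.mem_zpowers_iff.1 hij
    rw [← hk]
    exact ((show Commute x z from hzc x).zpow_right k).eq
  exact ⟨χ, μ, t, m, c, w, w', S, hw, hw', two_pow hp hpG hthin (hw.cen hN) (hw'.cen hN) hi (hw.cen hN),
    two_pow hp hpG hthin (hw.cen hN) (hw'.cen hN) hi (hw'.cen hN)⟩

/-- the hypotheses on `g` -/
theorem gpack {p : ℕ} (hp : p.Prime) {G : Type*} [Group G] {z g : G} {f : G → ZMod p}
    (hz : orderOf z = p) (hzc : ∀ x, x * z = z * x) (h : Cj z f g) (y : G) :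
    g * y = y * (g * z ^ (- f y).val) := by
  have : Fact p.Prime := ⟨hp⟩
  have hz1 : z ^ p = 1 := by rw [← hz]; exact pow_orderOf_eq_one z
  have h1 := h.inv hz1 hzc y
  rw [inv_inv] at h1
  calc g * y = g * y * g⁻¹ * g := by group
    _ = y * (z ^ (-f y).val * g) := by rw [h1]; group
    _ = _ := by rw [← ((show Commute g z from hzc g).pow_right _).eq]

theorem Str.g_mem {p : ℕ} (hp : p.Prime) {G : Type*} [Group G] [Finite G] (hpG : IsPGroup p G)
    {χ μ : G → ZMod p} {t m c z g : G} (S : Str p χ μ t m c)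
    (hzc : ∀ x, x * z = z * x) (hg : g ∈ commutator G)
    (hgc : Cen (Subgroup.zpowers z) g) {w w' : G} (hw : w ∈ commutator G) (hw' : w' ∈ commutator G)
    (hi : ∀ i j : ℤ, (∀ x, x * (w ^ i * w' ^ j) = w ^ i * w' ^ j * x) →
      (p : ℤ) ∣ i ∧ (p : ℤ) ∣ j) : g ∈ g3 G := by
  by_contra hx
  have : Fact p.Prime := ⟨hp⟩
  have : Group.IsNilpotent G := hpG.isNilpotent
  have := zp_normal hzc
  let L := ⁅g3 G, (⊤ : Subgroup G)⁆ ⊔ Subgroup.zpowers z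
  let C := (Subgroup.center (G ⧸ L)).comap (QuotientGroup.mk' L)
  have hC3 : g3 G ≤ C := by
    intro d hd
    show (d : G ⧸ L) ∈ Subgroup.center (G ⧸ L)
    rw [Subgroup.mem_center_iff]
    intro b
    obtain ⟨x, rfl⟩ := QuotientGroup.mk_surjective b
    have := (le_sup_left : _ ≤ L) (Subgroup.commutator_mem_commutator hd (Subgroup.mem_top x))
    rw [← QuotientGroup.eq_one_iff, commutatorElement_def] at this
    simp only [QuotientGroup.mk_mul, QuotientGroup.mk_inv] at this
    rw [← commutatorElement_def, commutatorElement_eq_one_iff_mul_comm] at this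
    exact this.symm
  have hgC : g ∈ C := Cen.mem (N := L) (fun x => (le_sup_right : _ ≤ L) (hgc x))
  have h1 : commutator G ≤ C := by
    apply S.gle _ hC3
    obtain ⟨k, hk⟩ := S.gen _ hg
    by_contra hc
    have h2 := dvd_of_zpow_mem hp S.cp (b := (c : G ⧸ g3 G)) (H := Subgroup.zpowers (g : G ⧸ g3 G))
      (l := k) (by
        intro h
        obtain ⟨l, hl⟩ := Subgroup.mem_zpowers_iff.1 h
        rw [← QuotientGroup.mk_zpow, QuotientGroup.eq] at hl
        apply hc
        have : c = (g ^ l) * ((g ^ l)⁻¹ * c) := by group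
        rw [this]
        exact C.mul_mem (C.zpow_mem hgC l) (hC3 hl))
      (by rw [zpow_natCast, ← hk]; exact Subgroup.mem_zpowers _)
    obtain ⟨l, rfl⟩ := Int.natCast_dvd_natCast.1 h2
    rw [pow_mul, S.cp, one_pow, QuotientGroup.eq_one_iff] at hk
    exact hx hk
  have h2 : g3 G ≤ L := by
    rw [Subgroup.commutator_le]
    intro x hx y _
    have h3 : (x : G ⧸ L) ∈ Subgroup.center (G ⧸ L) := h1 hx
    rw [Subgroup.mem_center_iff] at h3
    rw [← QuotientGroup.eq_one_iff, commutatorElement_def]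
    simp only [QuotientGroup.mk_mul, QuotientGroup.mk_inv]
    rw [← commutatorElement_def, commutatorElement_eq_one_iff_mul_comm]
    exact (h3 y).symm
  have h3 : g3 G ≤ Subgroup.zpowers z := nil_le _ _ h2
  have h4 : ∀ d ∈ g3 G, ∀ x, x * d = d * x := by
    intro d hd x
    obtain ⟨k, rfl⟩ := Subgroup.mem_zpowers_iff.1 (h3 hd)
    exact ((show Commute x z from hzc x).zpow_right k).eq
  obtain ⟨k, hk⟩ := S.gen w hw
  obtain ⟨k', hk'⟩ := S.gen w' hw'
  have h5 := hi k' (-k) (h4 _ (by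
    rw [← QuotientGroup.eq_one_iff, QuotientGroup.mk_mul, QuotientGroup.mk_zpow,
      QuotientGroup.mk_zpow, hk, hk', ← zpow_natCast, ← zpow_natCast, ← zpow_mul, ← zpow_mul,
      ← zpow_add]
    rw [← zpow_zero (c : G ⧸ g3 G)]; congr 1; ring))
  have h6 := h5.2
  rw [dvd_neg] at h6
  obtain ⟨l, rfl⟩ := Int.natCast_dvd_natCast.1 h6
  rw [pow_mul, S.cp, one_pow, QuotientGroup.eq_one_iff] at hk
  have h7 := (hi 1 0 (h4 _ (by simpa using hk))).1
  exact hp.one_lt.ne' (by exact_mod_cast Int.eq_one_of_dvd_one (by positivity) h7)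

theorem fin_odd {p : ℕ} (hp : p.Prime) {G : Type*} [Group G] [Finite G] (hpG : IsPGroup p G)
    (hthin : IsThinPGroup p G) {t m z g h1 h2 w : G} (hz : orderOf z = p)
    (hzc : ∀ x, x * z = z * x) (hg : g ^ p = 1) {χ α1 β1 α2 β2 : G → ZMod p} {β3 : G → ZMod p}
    (hgχ : ∀ y, g * y = y * (g * z ^ (χ y).val))
    (e1 : ∀ x, h1⁻¹ * x * h1 = x * (g ^ (α1 x).val * z ^ (β1 x).val))
    (e2 : ∀ x, h2⁻¹ * x * h2 = x * (g ^ (α2 x).val * z ^ (β2 x).val))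
    (e3 : Cj z β3 w)
    (t1 : h1⁻¹ * t * h1 = t * g) (m1 : Commute h1 m) (g1 : Commute h1 g)
    (t2 : Commute h2 t) (m2 : h2⁻¹ * m * h2 = m * g) (g2 : Commute h2 g)
    (t3 : Commute w t) (m3 : w⁻¹ * m * w = m * z) (g3 : Commute w g)
    (ht : g * t = t * (g * z)) (hm : Commute g m) : False := by
  have : Fact p.Prime := ⟨hp⟩
  have := zp_normal hzc
  let N := Subgroup.zpowers g ⊔ Subgroup.zpowers z
  have hgN : g ∈ N := (le_sup_left : _ ≤ N) (Subgroup.mem_zpowers g)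
  have hzN : z ∈ N := (le_sup_right : _ ≤ N) (Subgroup.mem_zpowers z)
  have hz' : ∀ x, Commute x z := hzc
  have hNn : N.Normal := by
    constructor
    intro n hn x
    have hle : N ≤ N.comap (MulAut.conj x).toMonoidHom := by
      refine sup_le ?_ ?_
      · rw [Subgroup.zpowers_le]
        show x * g * x⁻¹ ∈ N
        have : x * g * x⁻¹ = g * z ^ (χ x⁻¹).val := by
          rw [mul_assoc, hgχ]; group
        rw [this]
        exact N.mul_mem hgN (N.pow_mem hzN _)
      · rw [Subgroup.zpowers_le]
        show x * z * x⁻¹ ∈ N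
        rw [hzc]; simpa using hzN
    exact hle hn
  have gz : ∀ i : ℤ, Commute (g ^ i) t → (p : ℤ) ∣ i := by
    intro i hi
    have e : t⁻¹ * g * t = g * z := by rw [mul_assoc, ht]; group
    have h3 : t⁻¹ * g ^ i * t = g ^ i * z ^ i := by
      rw [← (hz' g).mul_zpow, ← e]
      have := conj_zpow (a := t⁻¹) (b := g) (i := i)
      rw [inv_inv] at this
      exact this.symm
    rw [mul_assoc, hi.eq, inv_mul_cancel_left] at h3
    rw [← hz]
    exact orderOf_dvd_iff_zpow_eq_one.2 (mul_eq_left.1 h3.symm)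
  refine three_false hp hpG hthin (N := N) (a := h1) (b := h2) (w := w) ?_ ?_ ?_ ?_
  · intro x; rw [e1, inv_mul_cancel_left]; exact N.mul_mem (N.pow_mem hgN _) (N.pow_mem hzN _)
  · intro x; rw [e2, inv_mul_cancel_left]; exact N.mul_mem (N.pow_mem hgN _) (N.pow_mem hzN _)
  · exact e3.cen hzN
  intro i j k hijk
  obtain ⟨a, ha, b, hb, hab⟩ := Subgroup.mem_sup_of_normal_right.1 hijk
  obtain ⟨a, rfl⟩ := Subgroup.mem_zpowers_iff.1 ha
  obtain ⟨b, rfl⟩ := Subgroup.mem_zpowers_iff.1 hb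
  have T : (h1 ^ i * h2 ^ j * w ^ k)⁻¹ * t * (h1 ^ i * h2 ^ j * w ^ k) = t * g ^ i := by
    have c1 : Commute (h2 ^ j * w ^ k) (t * g ^ i) :=
      ((t2.zpow_left j).mul_left (t3.zpow_left k)).mul_right
        ((g2.zpow_zpow j i).mul_left (g3.zpow_zpow k i))
    calc _ = (h2 ^ j * w ^ k)⁻¹ * ((h1 ^ i)⁻¹ * t * h1 ^ i) * (h2 ^ j * w ^ k) := by group
      _ = _ := by rw [conj_zp t1 g1, mul_assoc, ← c1.eq, inv_mul_cancel_left]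
  have M : (h1 ^ i * h2 ^ j * w ^ k)⁻¹ * m * (h1 ^ i * h2 ^ j * w ^ k) = m * (z ^ k * g ^ j) := by
    calc _ = (w ^ k)⁻¹ * ((h2 ^ j)⁻¹ * ((h1 ^ i)⁻¹ * (m * h1 ^ i)) * h2 ^ j) * w ^ k := by group
      _ = (w ^ k)⁻¹ * ((h2 ^ j)⁻¹ * m * h2 ^ j) * w ^ k := by
          rw [← (m1.zpow_left i).eq, inv_mul_cancel_left]
      _ = (w ^ k)⁻¹ * m * (g ^ j * w ^ k) := by rw [conj_zp m2 g2]; group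
      _ = ((w ^ k)⁻¹ * m * w ^ k) * g ^ j := by rw [← (g3.zpow_zpow k j).eq]; group
      _ = _ := by rw [conj_zp m3 (hz' w)]; group
  have hgt : g⁻¹ * t * g = t * z⁻¹ := by
    have : t * g = g * t * z⁻¹ := by rw [ht]; group
    rw [mul_assoc, this]; group
  have T2 : (g ^ a * z ^ b)⁻¹ * t * (g ^ a * z ^ b) = t * (z⁻¹) ^ a := by
    calc _ = (z ^ b)⁻¹ * ((g ^ a)⁻¹ * t * g ^ a) * z ^ b := by group
      _ = _ := by
        rw [conj_zp hgt (hz' g).inv_right, mul_assoc, ((hz' _).zpow_right b).eq, inv_mul_cancel_left]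
  have M2 : (g ^ a * z ^ b)⁻¹ * m * (g ^ a * z ^ b) = m := by
    have : Commute (g ^ a * z ^ b) m := (hm.zpow_left a).mul_left ((hz' m).symm.zpow_left b)
    rw [mul_assoc, ← this.eq, inv_mul_cancel_left]
  rw [← hab, T2] at T
  rw [← hab, M2] at M
  have T' := mul_left_cancel T
  have M' := mul_eq_left.1 M.symm
  have pi := gz i (by rw [← T']; exact ((hz' t).inv_right.zpow_right a).symm)
  have pj := gz j (by
    have : g ^ j = z ^ (-k) := by rw [zpow_neg]; exact (inv_eq_of_mul_eq_one_right M').symm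
    rw [this]; exact ((hz' t).zpow_right _).symm)
  refine ⟨pi, pj, ?_⟩
  obtain ⟨q, rfl⟩ := pj
  rw [zpow_mul g, zpow_natCast, hg, one_zpow, mul_one] at M'
  rw [← hz]
  exact orderOf_dvd_iff_zpow_eq_one.2 M'

end ThinP

namespace ThinP

theorem cen_of_g3 {G : Type*} [Group G] (h3 : g3 G = ⊥) {d : G} (hd : d ∈ commutator G) (x : G) :
    Commute d x := by
  have : ⁅d, x⁆ ∈ g3 G := Subgroup.commutator_mem_commutator hd trivial
  rw [h3, Subgroup.mem_bot, commutatorElement_eq_one_iff_mul_comm] at this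
  exact this

theorem odd_case {p : ℕ} (hp : p.Prime) (hp2 : 2 < p) {G : Type*} [Group G] [Finite G]
    (hpG : IsPGroup p G)
    (hthin : IsThinPGroup p G) (hna : ¬ ∀ a b : G, a * b = b * a)
    (hno : ∀ φ : MulAut G, orderOf φ = p → ∃ g, ∀ x, φ x = g⁻¹ * x * g)
    {z : G} (hz : orderOf z = p) (hzc : ∀ x, x * z = z * x) (hz2 : z ∈ commutator G)
    (hz3 : g3 G ≠ ⊥ → z ∈ g3 G) : False := by
  have : Fact p.Prime := ⟨hp⟩
  have hz1 : z ^ p = 1 := by rw [← hz]; exact pow_orderOf_eq_one z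
  have v1 : (1 : ZMod p).val = 1 := by
    have : Fact (1 < p) := ⟨hp.one_lt⟩
    exact ZMod.val_one p
  have hzne : z ≠ 1 := by
    intro h; rw [h, orderOf_one] at hz; exact hp.one_lt.ne hz
  obtain ⟨χ0, μ0, t0, m0, c0, w, w', S0, hw, hw', hwp, hwp'⟩ :=
    start hp hpG hthin hna hno hz hzc hz2
  obtain ⟨g, f, hf, ⟨s, hs⟩, hgp, hg, i0, j0, hgw⟩ := find_g hp hp2 hz hzc S0.toBas hw hw' hwp hwp'
  obtain ⟨χ, hχd⟩ : ∃ χ : G → ZMod p, ∀ x, χ x = - f x := ⟨fun x => - f x, fun _ => rfl⟩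
  have hχ : ∀ x y, χ (x * y) = χ x + χ y := by intro x y; rw [hχd, hχd, hχd, hf]; ring
  have hgχ : ∀ y, g * y = y * (g * z ^ (χ y).val) := by
    intro y; rw [hχd]; exact gpack hp hz hzc hg y
  have χg : χ g = 0 := by rw [hχd, hg.eq_zero hz rfl, neg_zero]
  have χz : χ z = 0 := by rw [hχd, hg.eq_zero hz (hzc g).symm, neg_zero]
  obtain ⟨μ, t, m, hμ, a1, a2, a3, a4⟩ := basis hp hpG (zp_ne hna) χ hχ
    ⟨s, by rw [hχd]; exact neg_ne_zero.2 hs⟩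
  have B : Bas p χ μ t m := ⟨hχ, hμ, a1, a2, a3, a4⟩
  obtain ⟨c, S⟩ := B.str hp hpG hthin hna
  have two_ne : (2 : ZMod p) ≠ 0 := by
    intro h
    have h' : ((2 : ℕ) : ZMod p) = 0 := by exact_mod_cast h
    rw [ZMod.natCast_eq_zero_iff] at h'
    exact absurd (Nat.le_of_dvd two_pos h') (not_le.2 hp2)
  obtain ⟨h1, e1⟩ := inner_of hp hno hz1 hgp hzc (χ := χ) (α := χ)
    (β := fun x => χ x * (χ x - 1) / 2) hgχ hχ
    (by intro x y; rw [hχ]; field_simp; ring) χg χz (by simp [χg]) (by simp [χz])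
  have t1 : h1⁻¹ * t * h1 = t * g := by rw [e1]; simp [a1, v1]
  have m1 : Commute h1 m := by
    have : h1⁻¹ * m * h1 = m := by rw [e1]; simp [a2]
    rw [mul_assoc, inv_mul_eq_iff_eq_mul] at this
    exact this.symm
  have g1 : Commute h1 g := by
    have : h1⁻¹ * g * h1 = g := by rw [e1]; simp [χg]
    rw [mul_assoc, inv_mul_eq_iff_eq_mul] at this
    exact this.symm
  have ht : g * t = t * (g * z) := by rw [hgχ, a1, v1, pow_one]
  have hm : Commute g m := by rw [Commute, SemiconjBy, hgχ, a2]; simp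
  by_cases h3 : g3 G = ⊥
  · have hgc : g ∈ commutator G := by
      have : g = ⁅t⁻¹, h1⁻¹⁆ := by
        rw [commutatorElement_def]
        calc g = t⁻¹ * (t * g) := by group
          _ = _ := by rw [← t1]; group
      rw [this]; exact Subgroup.commutator_mem_commutator trivial trivial
    have := cen_of_g3 h3 hgc t
    rw [this.eq] at ht
    apply hzne
    have h4 := mul_left_cancel ht
    exact mul_eq_left.1 h4.symm
  · have hz4 := hz3 h3
    have wc : w ∈ commutator G := S0.in_comm hp (hw.cen hz4)
    have wc' : w' ∈ commutator G := S0.in_comm hp (hw'.cen hz4)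
    have gc : g ∈ commutator G := S.in_comm hp (hg.cen hz4)
    have hi := fun i j => hw.indep hz hzc S0.toBas hw' i j
    have gm : g ∈ g3 G := S.g_mem hp hpG hzc gc (hg.cen (Subgroup.mem_zpowers z)) wc wc' hi
    have hpow := S.powE hp hpG wc wc' (fun i j hij => hi i j (by rw [hij]; simp))
    obtain ⟨ν, hν, hν3, νt, νm⟩ := S.nu hp hpow
    have μg : μ g = 0 := h_comm hμ gc
    have μz : μ z = 0 := h_comm hμ hz2
    obtain ⟨h2, e2⟩ := inner_of hp hno hz1 hgp hzc (χ := χ) (α := μ) (β := ν) hgχ hμ hν μg μz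
      (hν3 _ gm) (hν3 _ hz4)
    obtain ⟨u, hu⟩ := w_of hp hno hz1 hzc hμ μz
    have fx : ∀ {h x : G}, h⁻¹ * x * h = x → Commute h x := by
      intro h x e
      rw [mul_assoc, inv_mul_eq_iff_eq_mul] at e
      exact e.symm
    refine fin_odd hp hpG hthin hz hzc hgp hgχ e1 e2 hu t1 m1 g1 (fx ?_) ?_ (fx ?_) (fx ?_) ?_ (fx ?_)
      ht hm
    · rw [e2, a3, νt]; simp
    · rw [e2, a4, νm, v1]; simp
    · rw [e2, μg, hν3 _ gm]; simp
    · rw [hu, a3]; simp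
    · rw [hu, a4, v1]; simp
    · rw [hu, μg]; simp

theorem mul8 {G : Type*} [Group G] {t m c : G} {s : ZMod 2} (hc : ∀ x, Commute c x)
    (c2 : c ^ 2 = 1) (rel : m * t = t * m * c) (ht : t * t = c ^ s.val) (hm : m * m = c ^ s.val)
    (i j k i' j' k' : ZMod 2) :
    (t ^ i.val * m ^ j.val * c ^ k.val) * (t ^ i'.val * m ^ j'.val * c ^ k'.val) =
      t ^ (i + i').val * m ^ (j + j').val * c ^ (k + k' + j * i' + s * (i * i' + j * j')).val := by
  have h01 : ∀ i : ZMod 2, i = 0 ∨ i = 1 := by decide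
  have : Fact (Nat.Prime 2) := ⟨Nat.prime_two⟩
  have aux : ∀ (t : G), t * t = c ^ s.val → ∀ i i' : ZMod 2,
      t ^ i.val * t ^ i'.val = t ^ (i + i').val * c ^ (s * (i * i')).val := by
    intro t ht i i'
    have h1 : ((1 : ZMod 2) + 1) = 0 := rfl
    have h2 : (1 : ZMod 2).val = 1 := rfl
    rcases h01 i with rfl | rfl <;> rcases h01 i' with rfl | rfl
    · simp
    · simp
    · simp
    · rw [h1, h2, pow_one, ht]; simp
  have h1 := aux t ht i i'
  have h2 := aux m hm j j'
  have h3 := cpow rel (hc t) (hc m) i'.val j.val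
  rw [pow_mul, ← pv_mul c2] at h3
  have hcc : ∀ (k : ZMod 2) (x : G), c ^ k.val * x = x * c ^ k.val := fun k x =>
    ((hc x).pow_left _).eq
  rw [mul_add, pv_add c2, pv_add c2, pv_add c2, pv_add c2]
  calc _ = t ^ i.val * m ^ j.val * (c ^ k.val * (t ^ i'.val * m ^ j'.val * c ^ k'.val)) := by group
    _ = t ^ i.val * (m ^ j.val * t ^ i'.val) * m ^ j'.val * (c ^ k'.val * c ^ k.val) := by
        rw [hcc]; group
    _ = t ^ i.val * t ^ i'.val * m ^ j.val * (c ^ (j * i').val * m ^ j'.val) * (c ^ k'.val * c ^ k.val) := by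
        rw [h3]; group
    _ = (t ^ i.val * t ^ i'.val) * (m ^ j.val * m ^ j'.val) * (c ^ (j * i').val * (c ^ k'.val * c ^ k.val)) := by
        rw [hcc]; group
    _ = t ^ (i + i').val * (c ^ (s * (i * i')).val * (m ^ (j + j').val * c ^ (s * (j * j')).val)) *
         (c ^ (j * i').val * (c ^ k'.val * c ^ k.val)) := by rw [h1, h2]; group
    _ = t ^ (i + i').val * m ^ (j + j').val * (c ^ (s * (j * j')).val * c ^ (s * (i * i')).val *
         (c ^ (j * i').val * (c ^ k'.val * c ^ k.val))) := by rw [hcc]; group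
    _ = _ := by
      congr 1
      simp only [← pow_add]; congr 1; ring

theorem eight {G : Type*} [Group G] [Finite G]
    (hno : ∀ φ : MulAut G, orderOf φ = 2 → ∃ g, ∀ x, φ x = g⁻¹ * x * g)
    {χ μ : G → ZMod 2} {t m c : G} (S : Str 2 χ μ t m c) (h3 : g3 G = ⊥) (htm : t * t = m * m) :
    False := by
  have : Fact (Nat.Prime 2) := ⟨Nat.prime_two⟩
  have eq3 : ∀ {a b : G}, (a : G ⧸ g3 G) = b → a = b := by
    intro a b h
    rw [QuotientGroup.eq] at h
    have h' : a⁻¹ * b ∈ (⊥ : Subgroup G) := h3 ▸ h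
    exact inv_mul_eq_one.1 (Subgroup.mem_bot.1 h')
  have c2 : c ^ 2 = 1 := eq3 (by rw [QuotientGroup.mk_pow, S.cp]; rfl)
  have cne : c ≠ 1 := by
    intro h; apply S.cne; rw [h]; rfl
  have oc : orderOf c = 2 := orderOf_eq_prime c2 cne
  have hc : ∀ x, Commute c x := cen_of_g3 h3 S.cmem
  have gen : ∀ d ∈ commutator G, ∃ k : ZMod 2, d = c ^ k.val := by
    intro d hd
    obtain ⟨k, hk⟩ := S.gen d hd
    refine ⟨(k : ZMod 2), ?_⟩
    rw [pv_mod c2]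
    exact eq3 (by rw [hk, QuotientGroup.mk_pow])
  obtain ⟨s, ht⟩ := gen _ (S.powmem t)
  rw [sq] at ht
  have hm : m * m = c ^ s.val := by rw [← htm, ht]
  have rel := S.rel
  have cc : c * c = 1 := by rw [← sq, c2]
  have rel' : t * m = m * t * c := by rw [rel, mul_assoc, cc, mul_one]
  have hex : ∀ x : G, ∃ n : ZMod 2, x = t ^ (χ x).val * m ^ (μ x).val * c ^ n.val := by
    intro x
    obtain ⟨d, hd, e⟩ := S.dec x
    obtain ⟨k, rfl⟩ := gen d hd
    exact ⟨k, e⟩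
  choose ν hν using hex
  have uniq : ∀ (x : G) (n : ZMod 2), x = t ^ (χ x).val * m ^ (μ x).val * c ^ n.val → ν x = n := by
    intro x n h
    apply pv_inj oc
    exact mul_left_cancel ((hν x).symm.trans h)
  have νmul : ∀ x y, ν (x * y) =
      ν x + ν y + μ x * χ y + s * (χ x * χ y + μ x * μ y) := by
    intro x y
    apply uniq
    rw [S.hχ, S.hμ, ← mul8 hc c2 rel ht hm, ← hν, ← hν]
  let F : G → G := fun x => m ^ (χ x).val * t ^ (μ x).val * c ^ (ν x).val
  have Fmul : ∀ x y, F (x * y) = F x * F y := by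
    intro x y
    have h1 := mul8 hc c2 rel' hm ht (χ x) (μ x) (ν x) (χ y) (μ y) (ν y)
    show m ^ (χ (x * y)).val * t ^ (μ (x * y)).val * c ^ (ν (x * y)).val = _
    rw [S.hχ, S.hμ, νmul]
    exact h1.symm
  have χF : ∀ x, χ (F x) = μ x := by
    intro x
    simp only [F]
    rw [S.hχ, S.hχ, h_pow S.hχ, h_pow S.hχ, h_pow S.hχ, h_comm S.hχ S.cmem, S.ct, S.cm]; simp
  have μF : ∀ x, μ (F x) = χ x := by
    intro x
    simp only [F]
    rw [S.hμ, S.hμ, h_pow S.hμ, h_pow S.hμ, h_pow S.hμ, h_comm S.hμ S.cmem, S.ut, S.um]; simp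
  have νF : ∀ x, ν (F x) = χ x * μ x + ν x := by
    intro x
    apply uniq
    rw [χF, μF, pv_add c2, pv_mul c2, ← pow_mul]
    simp only [F]
    rw [cpow rel (hc t) (hc m)]; group
  have FF : ∀ x, F (F x) = x := by
    intro x
    show m ^ (χ (F x)).val * t ^ (μ (F x)).val * c ^ (ν (F x)).val = x
    rw [χF, μF, νF, cpow rel (hc t) (hc m), pow_mul, ← pv_mul c2, mul_assoc, ← pv_add c2]
    have : μ x * χ x + (χ x * μ x + ν x) = ν x := by
      have h2 : (2 : ZMod 2) = 0 := rfl
      linear_combination (μ x * χ x) * h2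
    rw [this, ← hν]
  let φ : MulAut G := { toFun := F, invFun := F, left_inv := FF, right_inv := FF, map_mul' := Fmul }
  have hχφ : ∀ x, χ (φ x) = μ x := χF
  have o : orderOf φ = 2 := by
    apply orderOf_eq_prime
    · ext x
      rw [sq, MulAut.mul_apply]
      exact FF x
    · intro h
      have := hχφ t
      rw [h, MulAut.one_apply, S.ct, S.ut] at this
      exact one_ne_zero this
  obtain ⟨g, hg⟩ := hno φ o
  have := hχφ t
  rw [hg, S.hχ, S.hχ, h_inv S.hχ, S.ct, S.ut] at this
  have h' : (1 : ZMod 2) = 0 := by linear_combination this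
  exact one_ne_zero h'

theorem two_g3 {G : Type*} [Group G] [Finite G] (hpG : IsPGroup 2 G)
    (hthin : IsThinPGroup 2 G) (hna : ¬ ∀ a b : G, a * b = b * a)
    (hno : ∀ φ : MulAut G, orderOf φ = 2 → ∃ g, ∀ x, φ x = g⁻¹ * x * g)
    {χ μ : G → ZMod 2} {t m c : G} (S : Str 2 χ μ t m c) (h3 : g3 G = ⊥) : False := by
  have hp := Nat.prime_two
  have eq3 : ∀ {a b : G}, (a : G ⧸ g3 G) = b → a = b := by
    intro a b h
    rw [QuotientGroup.eq] at h
    have h' : a⁻¹ * b ∈ (⊥ : Subgroup G) := h3 ▸ h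
    exact inv_mul_eq_one.1 (Subgroup.mem_bot.1 h')
  have c2 : c ^ 2 = 1 := eq3 (by rw [QuotientGroup.mk_pow, S.cp]; rfl)
  have gen : ∀ x : G, x * x = 1 ∨ x * x = c := by
    intro x
    obtain ⟨k, hk⟩ := S.gen _ (S.powmem x)
    have h1 : x * x = c ^ k := eq3 (by rw [← sq, hk, QuotientGroup.mk_pow])
    rcases Nat.even_or_odd' k with ⟨l, rfl | rfl⟩
    · left; rw [h1, pow_mul, c2, one_pow]
    · right; rw [h1, pow_succ, pow_mul, c2, one_pow, one_mul]
  have k1 : t * t ≠ m * m := fun h => eight hno S h3 h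
  have k2 : t * t ≠ (t * m) * (t * m) := by
    intro h
    have B : Bas 2 (fun x => χ x - μ x) μ t (t * m) :=
      ⟨fun x y => by rw [S.hχ, S.hμ]; ring, S.hμ, by rw [S.ct, S.ut]; ring,
        by rw [S.hχ, S.hμ, S.ct, S.cm, S.ut, S.um]; ring, S.ut, by rw [S.hμ, S.ut, S.um]; ring⟩
    obtain ⟨c', S'⟩ := B.str hp hpG hthin hna
    exact eight hno S' h3 h
  have k3 : m * m ≠ (t * m) * (t * m) := by
    intro h
    have B : Bas 2 (fun x => μ x - χ x) χ m (t * m) :=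
      ⟨fun x y => by rw [S.hχ, S.hμ]; ring, S.hχ, by rw [S.cm, S.um]; ring,
        by rw [S.hχ, S.hμ, S.ct, S.cm, S.ut, S.um]; ring, S.cm, by rw [S.hχ, S.ct, S.cm]; ring⟩
    obtain ⟨c', S'⟩ := B.str hp hpG hthin hna
    exact eight hno S' h3 h
  rcases gen t with a | a <;> rcases gen m with b | b <;> rcases gen (t * m) with d | d <;>
    simp_all

theorem main {p : ℕ} (hp : p.Prime) {G : Type*} [Group G] [Finite G]
    (hpG : IsPGroup p G) (hthin : IsThinPGroup p G) (hcard : p ^ 2 ≤ Nat.card G)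
    (hno : ∀ φ : MulAut G, orderOf φ = p → ∃ g, ∀ x, φ x = g⁻¹ * x * g) : False := by
  have : Fact p.Prime := ⟨hp⟩
  have v1 : (1 : ZMod p).val = 1 := by
    have : Fact (1 < p) := ⟨hp.one_lt⟩
    exact ZMod.val_one p
  by_cases hna : ∀ a b : G, a * b = b * a
  · have hnt : Nontrivial G := by
      rw [← Finite.one_lt_card_iff_nontrivial]
      exact lt_of_lt_of_le (Nat.one_lt_pow two_ne_zero hp.one_lt) hcard
    obtain ⟨z, -, hz, hzc⟩ := exists_z hp hpG (⊤ : Subgroup G) (by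
      intro h; exact bot_ne_top h.symm)
    have hz1 : z ^ p = 1 := by rw [← hz]; exact pow_orderOf_eq_one z
    obtain ⟨χ, hχ, ⟨t, ht⟩, hk⟩ := frat hp hpG (Subgroup.zpowers z) (by
      intro h
      have h1 := Nat.card_zpowers z
      rw [h, hz, Subgroup.card_top] at h1
      rw [h1, sq] at hcard
      have := hp.one_lt
      nlinarith)
    obtain ⟨w, hw⟩ := w_of hp hno hz1 hzc hχ (hk z (Subgroup.mem_zpowers z))
    have := hw.eq_zero hz (hna t w)
    rw [ht] at this
    exact one_ne_zero this
  · have hc2 : commutator G ≠ ⊥ := by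
      intro h
      apply hna
      intro a b
      rw [← commutatorElement_eq_one_iff_mul_comm, ← Subgroup.mem_bot, ← h]
      exact Subgroup.commutator_mem_commutator trivial trivial
    obtain ⟨z, hz2, hz, hzc, hz3⟩ : ∃ z ∈ commutator G, orderOf z = p ∧ (∀ x, x * z = z * x) ∧
        (g3 G ≠ ⊥ → z ∈ g3 G) := by
      by_cases h3 : g3 G = ⊥
      · obtain ⟨z, a, b, c⟩ := exists_z hp hpG _ hc2
        exact ⟨z, a, b, c, fun h => absurd h3 h⟩
      · obtain ⟨z, a, b, c⟩ := exists_z hp hpG _ h3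
        exact ⟨z, Subgroup.commutator_le_left _ _ a, b, c, fun _ => a⟩
    rcases hp.two_le.lt_or_eq with h2 | h2
    · exact odd_case hp h2 hpG hthin hna hno hz hzc hz2 hz3
    · subst h2
      obtain ⟨χ, μ, t, m, c, w, w', S, hw, hw', -, -⟩ := start hp hpG hthin hna hno hz hzc hz2
      by_cases h3 : g3 G = ⊥
      · exact two_g3 hpG hthin hna hno S h3
      · have hz4 := hz3 h3
        have hi := fun i j => hw.indep hz hzc S.toBas hw' i j
        exact S.two_false (S.powE hp hpG (S.in_comm hp (hw.cen hz4)) (S.in_comm hp (hw'.cen hz4))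
          (fun i j hij => hi i j (by rw [hij]; simp)))

end ThinP

/-- Every finite thin `p`-group of order at least `p ^ 2` has a non-inner automorphism
of order exactly `p`. -/
theorem thin_p_group_has_noninner_automorphism_of_order_p
    {p : ℕ} (hp : p.Prime) (G : Type*) [Group G] [Finite G]
    (hpG : IsPGroup p G) (hthin : IsThinPGroup p G) (hcard : p ^ 2 ≤ Nat.card G) :
    ∃ φ : MulAut G, orderOf φ = p ∧ ¬ ∃ g : G, ∀ x : G, φ x = g⁻¹ * x * g := by
  by_contra hcon
  refine ThinP.main hp hpG hthin hcard ?_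
  intro φ hφ
  by_contra h
  exact hcon ⟨φ, hφ, h⟩
end

section
/- Every finite thin p-group (p prime) is generated by at most 2 elements. -/
/-- Every finite thin `p`-group is generated by at most two elements. -/
theorem thin_p_group_two_generated
    {p : ℕ} (hp : p.Prime) {G : Type*} [Group G] [Finite G]
    (hpG : IsPGroup p G) (hthin : IsThinPGroup p G) :
    ∃ a b : G, Subgroup.closure {a, b} = ⊤ := by
  classical
  by_contra hcon
  push Not at hcon
  haveI : Fact p.Prime := ⟨hp⟩
  haveI : Group.IsNilpotent G := hpG.isNilpotent
  haveI := Fintype.ofFinite G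
  haveI : Finite (Subgroup G) := inferInstance
  haveI := Fintype.ofFinite (Subgroup G)
  have h1 := hthin {M | IsCoatom M}
    (fun N hN => Subgroup.NormalizerCondition.normal_of_coatom N
      Group.normalizerCondition_of_isNilpotent hN)
    (fun M hM N hN hne hle => hne ((hM.le_iff.1 hle).elim (fun h => absurd h hN.1) Eq.symm))
  let T : Finset (Subgroup G) := Finset.univ.filter (fun M => IsCoatom M)
  have hT : T.card ≤ p + 1 := by
    rw [← Set.ncard_coe_finset]
    simpa [T] using h1
  have hidx : ∀ M ∈ T, p * Nat.card M ≤ Nat.card G := by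
    intro M hM
    have hM' : IsCoatom M := by simpa [T] using hM
    obtain ⟨n, hn⟩ := hpG.index M
    rw [← M.index_mul_card]
    apply Nat.mul_le_mul_right
    rw [hn]
    apply Nat.le_self_pow
    rintro rfl
    exact hM'.1 (Subgroup.index_eq_one.1 (by simpa using hn))
  let F : Subgroup G → Finset (G × G) := fun M => Finset.univ.filter (fun x => x.1 ∈ M ∧ x.2 ∈ M)
  have hF : ∀ M, (F M).card = Nat.card M * Nat.card M := by
    intro M
    have : F M = (Finset.univ.filter (fun x => x ∈ M)) ×ˢ (Finset.univ.filter (fun x => x ∈ M)) := by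
      ext x; simp [F]
    rw [this, Finset.card_product, Nat.card_eq_fintype_card, Fintype.card_subtype]
  have hcov : (Finset.univ : Finset (G × G)) ⊆ T.biUnion F := by
    rintro ⟨a, b⟩ -
    obtain ⟨M, hM, hle⟩ := (eq_top_or_exists_le_coatom (Subgroup.closure {a, b})).resolve_left
      (hcon a b)
    rw [Finset.mem_biUnion]
    refine ⟨M, by simpa [T] using hM, ?_⟩
    have hs := (Subgroup.closure_le M).1 hle
    simp only [F, Finset.mem_filter, Finset.mem_univ, true_and]
    exact ⟨hs (by simp), hs (by simp)⟩
  have hc := (Finset.card_le_card hcov).trans Finset.card_biUnion_le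
  have hcG : (Finset.univ : Finset (G × G)).card = Nat.card G * Nat.card G := by
    simp [Nat.card_eq_fintype_card]
  have hpos : 0 < Nat.card G := Nat.card_pos
  have h2 : p * p * (Nat.card G * Nat.card G) ≤ T.card * (Nat.card G * Nat.card G) := by
    rw [← hcG]
    refine (Nat.mul_le_mul_left _ hc).trans ?_
    rw [Finset.mul_sum, hcG, ← smul_eq_mul]
    apply Finset.sum_le_card_nsmul
    intro M hM
    rw [hF]
    calc _ = (p * Nat.card M) * (p * Nat.card M) := by ring
      _ ≤ _ := Nat.mul_le_mul (hidx M hM) (hidx M hM)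
  have h3 := Nat.le_of_mul_le_mul_right h2 (Nat.mul_pos hpos hpos)
  have := hp.two_le
  nlinarith
end

section
/- Let p be a prime, let n ≥ 2, and let G be a finite p-group of order p^n and nilpotency class n−1 (i.e., of maximal class). Then G is thin: every antichain in the lattice of normal subgroups of G contains at most p+1 elements. -/
theorem thin_aux_class {p : ℕ} (hp : p.Prime) (k : ℕ) :
    ∀ (H : Type*) [Group H] [Finite H] [Group.IsNilpotent H], Nat.card H = p ^ k →
      Group.nilpotencyClass H ≤ max 1 (k - 1) := by
  haveI : Fact p.Prime := ⟨hp⟩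
  induction k using Nat.strong_induction_on with
  | _ k ih =>
    intro H _ _ _ hc
    by_cases hk : k ≤ 2
    · have hcomm : ∀ a b : H, a * b = b * a := by
        have : k = 0 ∨ k = 1 ∨ k = 2 := by omega
        rcases this with rfl | rfl | rfl
        · have : Subsingleton H := (Nat.card_eq_one_iff_unique.mp (by simpa using hc)).1
          intro a b; exact Subsingleton.elim _ _
        · have : IsCyclic H := isCyclic_of_prime_card (p := p) (by simpa using hc)
          intro a b; exact (IsCyclic.isMulCommutative (α := H)).is_comm.comm a b
        · intro a b; exact IsPGroup.commutative_of_card_eq_prime_sq hc a b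
      have : Group.nilpotencyClass H ≤ 1 := by
        letI : CommGroup H := { (inferInstance : Group H) with mul_comm := hcomm }
        exact CommGroup.nilpotencyClass_le_one (G := H)
      omega
    · have hnt : Nontrivial H := by
        rw [← Finite.one_lt_card_iff_nontrivial, hc]
        exact Nat.one_lt_pow (by omega) hp.one_lt
      have h1 := Group.nilpotencyClass_eq_quotient_center_plus_one (G := H)
      have hz := Group.IsNilpotent.center_ne_bot (G := H)
      have hmul := Subgroup.card_eq_card_quotient_mul_card_subgroup (Subgroup.center H)
      have hdvd : Nat.card (H ⧸ Subgroup.center H) ∣ p ^ k := by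
        rw [← hc, hmul]; exact Dvd.intro _ rfl
      obtain ⟨j, hj, hjc⟩ := (Nat.dvd_prime_pow hp).1 hdvd
      have hjk : j < k := by
        rcases Nat.lt_or_ge j k with h | h
        · exact h
        · exfalso
          have : j = k := by omega
          subst this
          rw [hc, hjc] at hmul
          have hpos : 0 < p ^ j := Nat.pow_pos hp.pos
          have : Nat.card (Subgroup.center H) = 1 := by
            nlinarith
          exact hz (Subgroup.eq_bot_of_card_eq _ this)
      have := ih j hjk (H ⧸ Subgroup.center H) hjc
      omega

theorem thin_aux_le {p : ℕ} (hp : p.Prime) {G : Type*} [Group G] [Finite G]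
    [Group.IsNilpotent G] (N : Subgroup G) [N.Normal] (j k : ℕ) (hjk : j ≤ k) (hk : 2 ≤ k)
    (hN : N.index = p ^ j) : (⊤ : Subgroup G).lowerCentralSeries (k - 1) ≤ N := by
  have h := thin_aux_class hp j (G ⧸ N) hN
  have h2 : (⊤ : Subgroup (G ⧸ N)).lowerCentralSeries (k - 1) = ⊥ :=
    Subgroup.lowerCentralSeries_eq_bot_iff_nilpotencyClass_le.2 (by omega)
  have h3 := Subgroup.map_lowerCentralSeries (⊤ : Subgroup G) (QuotientGroup.mk' N) (k - 1)
  rw [Subgroup.map_top_of_surjective _ (QuotientGroup.mk'_surjective N), h2,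
    Subgroup.map_eq_bot_iff, QuotientGroup.ker_mk'] at h3
  exact h3

theorem thin_aux_card {p n : ℕ} (hp : p.Prime) {G : Type*} [Group G] [Finite G]
    [Group.IsNilpotent G] (hcard : Nat.card G = p ^ n)
    (hclass : Group.nilpotencyClass G = n - 1) (d : ℕ) (hd : d ≤ n - 1) :
    p ^ d ≤ Nat.card ((⊤ : Subgroup G).lowerCentralSeries (n - 1 - d)) := by
  induction d with
  | zero => simpa using Nat.succ_le_of_lt Nat.card_pos
  | succ d ih =>
    have ih := ih (by omega)
    obtain ⟨i, hi⟩ : ∃ i, i = n - 1 - (d + 1) := ⟨_, rfl⟩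
    rw [← hi]
    have hi' : n - 1 - d = i + 1 := by omega
    rw [hi'] at ih
    have hle : (⊤ : Subgroup G).lowerCentralSeries (i + 1) ≤
      (⊤ : Subgroup G).lowerCentralSeries i :=
      Subgroup.lowerCentralSeries_antitone _ (Nat.le_succ i)
    have hne : (⊤ : Subgroup G).lowerCentralSeries (i + 1) ≠
        (⊤ : Subgroup G).lowerCentralSeries i := by
      intro he
      have hconst : ∀ m, (⊤ : Subgroup G).lowerCentralSeries (i + m) =
          (⊤ : Subgroup G).lowerCentralSeries i := by
        intro m
        induction m with
        | zero => rfl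
        | succ m ihm =>
          rw [← add_assoc, Subgroup.lowerCentralSeries_succ, ihm,
            ← Subgroup.lowerCentralSeries_succ, he]
      have hb : (⊤ : Subgroup G).lowerCentralSeries (n - 1) = ⊥ :=
        Subgroup.lowerCentralSeries_eq_bot_iff_nilpotencyClass_le.2 hclass.le
      have h1 := hconst (d + 1)
      rw [show i + (d + 1) = n - 1 by omega, hb] at h1
      have := Subgroup.lowerCentralSeries_eq_bot_iff_nilpotencyClass_le.1 h1.symm
      omega
    obtain ⟨a, -, ha⟩ := (Nat.dvd_prime_pow hp).1 (hcard ▸ Subgroup.card_subgroup_dvd_card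
      ((⊤ : Subgroup G).lowerCentralSeries i))
    obtain ⟨b, -, hb⟩ := (Nat.dvd_prime_pow hp).1 (hcard ▸ Subgroup.card_subgroup_dvd_card
      ((⊤ : Subgroup G).lowerCentralSeries (i + 1)))
    rw [hb] at ih
    rw [ha]
    have hdb := (Nat.pow_le_pow_iff_right hp.one_lt).1 ih
    have hba : b < a := by
      by_contra hcon
      exact hne (Subgroup.eq_of_le_of_card_ge hle (by
        rw [ha, hb]; exact Nat.pow_le_pow_right hp.pos (by omega)))
    exact Nat.pow_le_pow_right hp.pos (by omega)

theorem thin_aux_eq {p n : ℕ} (hp : p.Prime) {G : Type*} [Group G] [Finite G]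
    [Group.IsNilpotent G] (hcard : Nat.card G = p ^ n)
    (hclass : Group.nilpotencyClass G = n - 1) (N : Subgroup G) [N.Normal] (k : ℕ) (hk : 2 ≤ k)
    (hkn : k ≤ n) (hN : N.index = p ^ k) :
    (⊤ : Subgroup G).lowerCentralSeries (k - 1) = N := by
  refine Subgroup.eq_of_le_of_card_ge (thin_aux_le hp N k k le_rfl hk hN) ?_
  have h := thin_aux_card hp hcard hclass (n - k) (by omega)
  rw [show n - 1 - (n - k) = k - 1 by omega] at h
  refine le_trans (le_of_eq ?_) h
  have hm := N.card_mul_index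
  rw [hN, hcard, ← Nat.sub_add_cancel hkn, pow_add] at hm
  simpa using Nat.eq_of_mul_eq_mul_right (Nat.pow_pos hp.pos) hm

/-- Every finite `p`-group of maximal class (order `p ^ n`, `n ≥ 2`, nilpotency class
`n - 1`) is thin. -/
theorem maximal_class_is_thin
    {p n : ℕ} (hp : p.Prime) (hn : 2 ≤ n) {G : Type*} [Group G] [Finite G]
    [Group.IsNilpotent G]
    (hpG : IsPGroup p G) (hcard : Nat.card G = p ^ n)
    (hclass : Group.nilpotencyClass G = n - 1) :
    IsThinPGroup p G := by
  intro S hS hanti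
  have hidx : ∀ N : Subgroup G, ∃ k ≤ n, N.index = p ^ k := fun N =>
    (Nat.dvd_prime_pow hp).1 (hcard ▸ N.index_dvd_card)
  by_cases hS1 : S.ncard ≤ 1
  · omega
  have hall : ∀ N ∈ S, N.index = p := by
    intro N hN
    obtain ⟨M, hM, hMN⟩ := Set.exists_ne_of_one_lt_ncard (not_le.1 hS1) N
    haveI := hS N hN
    haveI := hS M hM
    obtain ⟨k, hkn, hk⟩ := hidx N
    obtain ⟨j, hjn, hj⟩ := hidx M
    have hk0 : k ≠ 0 := by
      rintro rfl
      have : N = ⊤ := Subgroup.index_eq_one.1 (by simpa using hk)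
      exact hanti hM hN hMN (this ▸ le_top)
    have hk2 : ¬ 2 ≤ k := by
      intro hk2
      have hNe := thin_aux_eq hp hcard hclass N k hk2 hkn hk
      by_cases hjk : j ≤ k
      · exact hanti hN hM hMN.symm (hNe ▸ thin_aux_le hp M j k hjk hk2 hj)
      · have hMe := thin_aux_eq hp hcard hclass M j (by omega) hjn hj
        refine hanti hM hN hMN ?_
        rw [← hMe]
        exact thin_aux_le hp N k j (by omega) (by omega) hk
    have : k = 1 := by omega
    subst this
    simpa using hk
  obtain ⟨m, rfl⟩ : ∃ m, n = m + 2 := ⟨n - 2, by omega⟩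
  have hcardN : ∀ N : Subgroup G, ∀ k ≤ m + 2, N.index = p ^ k →
      Nat.card N = p ^ (m + 2 - k) := by
    intro N k hkn hN
    have hm := N.card_mul_index
    rw [hN, hcard] at hm
    conv_rhs at hm => rw [← Nat.sub_add_cancel hkn, pow_add]
    exact Nat.eq_of_mul_eq_mul_right (Nat.pow_pos hp.pos) hm
  set K := (⊤ : Subgroup G).lowerCentralSeries (2 - 1) with hK
  have hinf : ∀ N ∈ S, ∀ M ∈ S, N ≠ M → N ⊓ M = K ∧ (N ⊓ M).index = p ^ 2 := by
    intro N hN M hM hne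
    haveI := hS N hN
    haveI := hS M hM
    obtain ⟨k, hkn, hk⟩ := hidx (N ⊓ M)
    have hle := Subgroup.index_inf_le (H := N) (K := M)
    rw [hall N hN, hall M hM, hk, ← sq] at hle
    have hk2 := (Nat.pow_le_pow_iff_right hp.one_lt).1 hle
    have : k = 2 := by
      by_contra hcon
      have h1 := hcardN _ k hkn hk
      have h2 := hcardN N 1 (by omega) (by simpa using hall N hN)
      have h3 : N ⊓ M = N := Subgroup.eq_of_le_of_card_ge inf_le_left (by
        rw [h1, h2]; exact Nat.pow_le_pow_right hp.pos (by omega))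
      exact hanti hN hM hne (inf_eq_left.1 h3)
    subst this
    exact ⟨(thin_aux_eq hp hcard hclass (N ⊓ M) 2 le_rfl hkn hk).symm, hk⟩
  have hKle : ∀ N ∈ S, K ≤ N := by
    intro N hN
    haveI := hS N hN
    exact thin_aux_le hp N 1 2 (by omega) le_rfl (by simpa using hall N hN)
  have hKc : Nat.card K = p ^ m := by
    obtain ⟨N, hN⟩ : S.Nonempty := by
      rw [Set.nonempty_iff_ne_empty]; rintro rfl; simp at hS1
    obtain ⟨M, hM, hMN⟩ := Set.exists_ne_of_one_lt_ncard (not_le.1 hS1) N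
    obtain ⟨h1, h2⟩ := hinf N hN M hM hMN.symm
    rw [← h1]
    exact hcardN _ 2 (by omega) h2
  classical
  haveI := Fintype.ofFinite G
  have hSf : S.Finite := Set.toFinite S
  let F : Subgroup G → Finset G := fun N => ((N : Set G) \ (K : Set G)).toFinset
  have hF : ∀ N : Subgroup G, K ≤ N → (F N).card + p ^ m = Nat.card N := by
    intro N hKN
    rw [← hKc]
    have := Set.ncard_sdiff_add_ncard_of_subset (s := (K : Set G)) (t := (N : Set G)) hKN
    rw [Set.ncard_eq_toFinset_card'] at this
    exact this
  have hdisj : Set.PairwiseDisjoint (hSf.toFinset : Set (Subgroup G)) F := by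
    intro N hN M hM hne
    have hN : N ∈ S := by simpa using hN
    have hM : M ∈ S := by simpa using hM
    have h := (hinf N hN M hM hne).1
    rw [Function.onFun, Finset.disjoint_left]
    intro x hx hy
    simp only [F, Set.mem_toFinset, Set.mem_sdiff, SetLike.mem_coe] at hx hy
    exact hx.2 (h ▸ ⟨hx.1, hy.1⟩)
  have hb := Finset.card_biUnion hdisj
  have hsub : hSf.toFinset.biUnion F ⊆ F ⊤ := by
    intro x hx
    simp only [F, Finset.mem_biUnion, Set.mem_toFinset, Set.mem_sdiff, SetLike.mem_coe] at hx ⊢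
    obtain ⟨N, -, -, h⟩ := hx
    exact ⟨Subgroup.mem_top _, h⟩
  have hle := Finset.card_le_card hsub
  have htop := hF ⊤ le_top
  rw [Subgroup.card_top, hcard] at htop
  obtain ⟨q, rfl⟩ : ∃ q, p = q + 1 := ⟨p - 1, by have := hp.pos; omega⟩
  have hq : 0 < q := by have := hp.two_le; omega
  have hsum : ∑ N ∈ hSf.toFinset, (F N).card = S.ncard * (q * (q + 1) ^ m) := by
    rw [Finset.sum_const_nat (m := q * (q + 1) ^ m), Set.ncard_eq_toFinset_card S hSf]
    intro N hN
    have hN : N ∈ S := by simpa using hN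
    have h1 := hF N (hKle N hN)
    rw [hcardN N 1 (by omega) (by simpa using hall N hN),
      show m + 2 - 1 = m + 1 by omega, pow_succ] at h1
    linarith
  rw [hb, hsum] at hle
  have hpos : 0 < q * (q + 1) ^ m := Nat.mul_pos hq (Nat.pow_pos (by omega))
  refine Nat.le_of_mul_le_mul_right (c := q * (q + 1) ^ m) ?_ hpos
  refine hle.trans (le_of_eq ?_)
  have : (q + 1) ^ (m + 2) = (q + 1) ^ m * (q + 1) ^ 2 := pow_add _ _ _
  rw [this] at htop
  linarith
end

section
/- Every nonabelian finite thin 2-group is of maximal class; that is, if G is a nonabelian finite 2-group of order 2^n in which every antichain of normal subgroups has at most 3 elements, then the nilpotency class of G equals n−1. -/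
universe u

lemma aux_comm {G : Type*} [Group G] (A : Subgroup G) (hA : A.index = 2)
    (hc : ∀ a ∈ A, ∀ b ∈ A, a * b = b * a) (y : G) (hy : y ∉ A) :
    ∃ φ : A →* G, (∀ a : A, φ a = a * (y * (a : G)⁻¹ * y⁻¹)) ∧ commutator G ≤ φ.range := by
  have hn : A.Normal := Subgroup.normal_of_index_eq_two hA
  have hconj : ∀ a ∈ A, y * a * y⁻¹ ∈ A := fun a ha => hn.conj_mem a ha y
  have hmul : ∀ a b : A, ((a * b : A) : G) * (y * ((a * b : A) : G)⁻¹ * y⁻¹) =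
      (a * (y * (a : G)⁻¹ * y⁻¹)) * (b * (y * (b : G)⁻¹ * y⁻¹)) := by
    rintro ⟨a, ha⟩ ⟨b, hb⟩
    have h1 := hc b hb _ (hconj _ (A.inv_mem ha))
    have h2 := hc _ (A.inv_mem hb) _ (A.inv_mem ha)
    simp only [Subgroup.coe_mul, mul_inv_rev]
    calc a * b * (y * (b⁻¹ * a⁻¹) * y⁻¹) = a * (b * (y * a⁻¹ * y⁻¹)) * (y * b⁻¹ * y⁻¹) := by
          rw [h2]; group
      _ = _ := by rw [h1]; group
  let φ : A →* G := MonoidHom.mk' (fun a => a * (y * (a : G)⁻¹ * y⁻¹)) hmul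
  have hφ : ∀ a : A, φ a = a * (y * (a : G)⁻¹ * y⁻¹) := fun a => rfl
  refine ⟨φ, hφ, ?_⟩
  have hdec : ∀ g : G, g ∈ A ∨ ∃ a ∈ A, g = a * y := by
    intro g
    by_cases h : g ∈ A
    · exact Or.inl h
    · right
      refine ⟨g * y⁻¹, ?_, by group⟩
      rw [Subgroup.mul_mem_iff_of_index_two hA]
      simp [h, hy]
  have hRA : ∀ r ∈ φ.range, r ∈ A := by
    rintro _ ⟨a, rfl⟩
    rw [hφ]
    exact A.mul_mem a.2 (hconj _ (A.inv_mem a.2))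
  have hyR : ∀ r ∈ φ.range, y * r * y⁻¹ ∈ φ.range := by
    rintro _ ⟨a, rfl⟩
    refine ⟨⟨y * a * y⁻¹, hconj _ a.2⟩, ?_⟩
    simp only [hφ]; group
  have hAR : ∀ a ∈ A, ∀ r ∈ φ.range, a * r * a⁻¹ ∈ φ.range := by
    intro a ha r hr
    rw [hc a ha r (hRA r hr)]
    simpa using hr
  have hR : φ.range.Normal := by
    constructor
    intro r hr g
    rcases hdec g with h | ⟨a, ha, rfl⟩
    · exact hAR g h r hr
    · have := hAR a ha _ (hyR r hr)
      simpa [mul_assoc] using this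
  have key : ∀ a ∈ A, (QuotientGroup.mk' φ.range a) * (QuotientGroup.mk' φ.range y) =
      (QuotientGroup.mk' φ.range y) * (QuotientGroup.mk' φ.range a) := by
    intro a ha
    have h : QuotientGroup.mk' φ.range (φ ⟨a, ha⟩) = 1 := by
      rw [QuotientGroup.mk'_apply, QuotientGroup.eq_one_iff]; exact ⟨_, rfl⟩
    rw [hφ] at h
    simp only [map_mul, map_inv] at h
    rw [← mul_assoc, mul_inv_eq_one, ← mul_assoc, mul_inv_eq_iff_eq_mul] at h
    exact h
  have key2 : ∀ a ∈ A, ∀ b ∈ A, (QuotientGroup.mk' φ.range a) * (QuotientGroup.mk' φ.range b) =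
      (QuotientGroup.mk' φ.range b) * (QuotientGroup.mk' φ.range a) := by
    intro a ha b hb
    rw [← map_mul, hc a ha b hb, map_mul]
  rw [commutator_def, Subgroup.commutator_le]
  intro g _ h _
  rw [← QuotientGroup.eq_one_iff, ← QuotientGroup.mk'_apply, map_commutatorElement,
    commutatorElement_eq_one_iff_mul_comm]
  rcases hdec g with hg | ⟨a, ha, rfl⟩ <;> rcases hdec h with hh | ⟨b, hb, rfl⟩
  · exact key2 g hg h hh
  · rw [map_mul, ← mul_assoc, key2 g hg b hb, mul_assoc, key g hg, mul_assoc]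
  · rw [map_mul, mul_assoc, ← key h hh, ← mul_assoc, key2 a ha h hh, mul_assoc]
  · rw [map_mul, map_mul]
    have h1 := key a ha
    have h2 := key b hb
    have h3 := key2 a ha b hb
    rw [mul_assoc, ← mul_assoc _ (QuotientGroup.mk' φ.range b), ← h2, mul_assoc, mul_assoc,
      ← mul_assoc _ (QuotientGroup.mk' φ.range a), ← h1, ← mul_assoc, ← mul_assoc, h3]
    group

lemma aux_center {G : Type*} [Group G] [Finite G] (hG : IsPGroup 2 G) (h : commutator G ≠ ⊥) :
    ∃ z ∈ commutator G, z ∈ Subgroup.center G ∧ orderOf z = 2 := by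
  have : Fact (Nat.Prime 2) := ⟨Nat.prime_two⟩
  have hd : 2 ∣ Nat.card (commutator G) := by
    rcases (hG.to_subgroup (commutator G)).card_eq_or_dvd with h1 | h1
    · exact absurd (Subgroup.card_eq_one.mp h1) h
    · exact h1
  obtain ⟨b, hb, hne⟩ := (hG.of_equiv ConjAct.toConjAct).exists_fixed_point_of_prime_dvd_card_of_fixed_point
    (commutator G) hd (a := 1) (by intro g; simp)
  have hbc : (b : G) ∈ Subgroup.center G := by
    rw [Subgroup.mem_center_iff]
    intro g
    have := congrArg Subtype.val (hb (ConjAct.toConjAct g))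
    rw [ConjAct.Subgroup.val_conj_smul, ConjAct.toConjAct_smul] at this
    exact mul_inv_eq_iff_eq_mul.mp this
  have hd2 : 2 ∣ Nat.card (commutator G ⊓ Subgroup.center G : Subgroup G) := by
    rcases (hG.to_subgroup (commutator G ⊓ Subgroup.center G)).card_eq_or_dvd with h1 | h1
    · have h2 : (b : G) ∈ (commutator G ⊓ Subgroup.center G : Subgroup G) := ⟨b.2, hbc⟩
      rw [Subgroup.card_eq_one.mp h1, Subgroup.mem_bot] at h2
      exact absurd (Subtype.ext h2.symm) hne
    · exact h1
  obtain ⟨z, hz⟩ := exists_prime_orderOf_dvd_card' 2 hd2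
  exact ⟨z, z.2.1, z.2.2, by rw [Subgroup.orderOf_coe]; exact hz⟩

lemma aux_index_map {G H : Type*} [Group G] [Finite G] [Group H] (f : G →* H)
    (hf : Function.Surjective f) : (commutator H).index ≤ (commutator G).index := by
  have h : commutator H = (commutator G).map f := by
    rw [commutator_def, commutator_def, Subgroup.map_commutator, ← MonoidHom.range_eq_map,
      MonoidHom.range_eq_top.mpr hf]
  rw [h]
  exact Nat.le_of_dvd (Nat.pos_of_ne_zero Subgroup.index_ne_zero_of_finite)
    (Subgroup.index_map_dvd _ hf)

lemma aux_four_le {G : Type*} [Group G] [Finite G] (hG : IsPGroup 2 G) (g : G) (hg : g ^ 2 ≠ 1) :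
    4 ≤ orderOf g := by
  have : Fact (Nat.Prime 2) := ⟨Nat.prime_two⟩
  obtain ⟨j, hj⟩ := IsPGroup.iff_orderOf.mp hG g
  rw [hj]
  have hj2 : 2 ≤ j := by
    by_contra hlt
    apply hg
    apply orderOf_dvd_iff_pow_eq_one.mp
    rw [hj]
    exact (pow_dvd_pow 2 (by omega : j ≤ 1))
  calc 4 = 2 ^ 2 := rfl
    _ ≤ 2 ^ j := Nat.pow_le_pow_right (by norm_num) hj2

theorem aux_cyclic (k : ℕ) : ∀ (G : Type u) [Group G] [Finite G], IsPGroup 2 G → Nat.card G = k →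
    (commutator G).index ≤ 4 → ∃ x : G, (Subgroup.zpowers x).index ≤ 2 := by
  induction k using Nat.strong_induction_on with
  | _ k ih =>
  intro G _ _ hG hk hi
  have hpos : 0 < Nat.card G := Nat.card_pos
  by_cases hcm : commutator G = ⊥
  · rw [hcm, Subgroup.index_bot] at hi
    by_cases ht : ∃ g : G, g ≠ 1
    · obtain ⟨g, hg⟩ := ht
      refine ⟨g, ?_⟩
      have h1 := (Subgroup.zpowers g).card_mul_index
      have h2 : 2 ≤ Nat.card (Subgroup.zpowers g) := by
        rw [Nat.card_zpowers]
        have := orderOf_pos g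
        have : orderOf g ≠ 1 := by simpa using hg
        omega
      nlinarith
    · push Not at ht
      refine ⟨1, ?_⟩
      have : Subgroup.zpowers (1 : G) = ⊤ := by
        rw [eq_top_iff]; intro g _; rw [ht g]; exact one_mem _
      rw [this]; simp
  have hnc : ¬ ∀ a b : G, a * b = b * a := by
    intro h
    apply hcm
    rw [commutator_eq_bot_iff_center_eq_top, eq_top_iff]
    intro a _
    rw [Subgroup.mem_center_iff]
    intro g; exact h g a
  obtain ⟨z, hzc, hzZ, hz2⟩ := aux_center hG hcm
  have hzcomm : ∀ g : G, g * z = z * g := Subgroup.mem_center_iff.mp hzZ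
  have hNn : (Subgroup.zpowers z).Normal := by
    constructor
    intro n hn g
    have : n ∈ Subgroup.center G := (Subgroup.zpowers_le.mpr hzZ) hn
    rw [Subgroup.mem_center_iff.mp this g]; simpa using hn
  have hNcard : Nat.card (Subgroup.zpowers z) = 2 := by rw [Nat.card_zpowers, hz2]
  have hz1 : z ≠ 1 := by rintro rfl; simp at hz2
  have hzsq : z ^ 2 = 1 := by rw [← hz2]; exact pow_orderOf_eq_one z
  have hlt : Nat.card (G ⧸ Subgroup.zpowers z) < k := by
    have := (Subgroup.zpowers z).card_mul_index
    rw [hNcard, hk] at this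
    have h3 : (Subgroup.zpowers z).index = Nat.card (G ⧸ Subgroup.zpowers z) := rfl
    omega
  obtain ⟨xb, hxb⟩ := ih _ hlt (G ⧸ Subgroup.zpowers z) (hG.to_quotient _) rfl
    ((aux_index_map (QuotientGroup.mk' _) (QuotientGroup.mk'_surjective _)).trans hi)
  obtain ⟨x, rfl⟩ := QuotientGroup.mk'_surjective _ xb
  set A := (Subgroup.zpowers (QuotientGroup.mk' (Subgroup.zpowers z) x)).comap
    (QuotientGroup.mk' (Subgroup.zpowers z)) with hAdef
  have hAi : A.index ≤ 2 := by
    rw [hAdef, Subgroup.index_comap_of_surjective _ (QuotientGroup.mk'_surjective _)]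
    exact hxb
  have hA : ∀ a ∈ A, ∃ i j : ℤ, a = x ^ i * z ^ j := by
    intro a ha
    rw [hAdef, Subgroup.mem_comap, Subgroup.mem_zpowers_iff] at ha
    obtain ⟨i, hi⟩ := ha
    rw [← map_zpow, QuotientGroup.mk'_eq_mk'] at hi
    obtain ⟨n, hn, h⟩ := hi
    obtain ⟨j, rfl⟩ := Subgroup.mem_zpowers_iff.mp hn
    exact ⟨i, j, h.symm⟩
  have hzc' : ∀ g : G, Commute g z := hzcomm
  have hAc : ∀ a ∈ A, ∀ b ∈ A, a * b = b * a := by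
    intro a ha b hb
    obtain ⟨i, j, rfl⟩ := hA a ha
    obtain ⟨i', j', rfl⟩ := hA b hb
    have h1 : Commute (x ^ i) (x ^ i') := Commute.zpow_zpow_self x i i'
    have h2 : ∀ (g : G) (j : ℤ), Commute g (z ^ j) := fun g j => (hzc' g).zpow_right j
    exact (h1.mul_right (h2 _ _)).mul_left (h2 (x ^ i' * z ^ j') j).symm
  have hAi2 : A.index = 2 := by
    have h0 : A.index ≠ 0 := Subgroup.index_ne_zero_of_finite
    have h1 : A.index ≠ 1 := by
      intro h1
      rw [Subgroup.index_eq_one] at h1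
      apply hnc
      intro a b
      exact hAc a (h1 ▸ Subgroup.mem_top a) b (h1 ▸ Subgroup.mem_top b)
    omega
  by_cases hzx : z ∈ Subgroup.zpowers x
  · refine ⟨x, ?_⟩
    rw [← hAi2]
    apply Nat.le_of_dvd (by omega)
    apply Subgroup.index_dvd_of_le
    intro a ha
    obtain ⟨i, j, rfl⟩ := hA a ha
    exact mul_mem (zpow_mem (Subgroup.mem_zpowers x) i) (zpow_mem hzx j)
  obtain ⟨y, hy⟩ : ∃ y, y ∉ A := by
    by_contra h
    push Not at h
    have : A = ⊤ := by rw [eq_top_iff]; intro g _; exact h g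
    rw [this] at hAi2; simp at hAi2
  obtain ⟨φ, hφ, hφr⟩ := aux_comm A hAi2 hAc y hy
  have hxA : x ∈ A := by rw [hAdef, Subgroup.mem_comap]; exact Subgroup.mem_zpowers _
  have hzA : z ∈ A := by
    rw [hAdef, Subgroup.mem_comap]
    have : QuotientGroup.mk' (Subgroup.zpowers z) z = 1 := by
      rw [QuotientGroup.mk'_apply, QuotientGroup.eq_one_iff]; exact Subgroup.mem_zpowers z
    rw [this]; exact one_mem _
  have hφz : φ ⟨z, hzA⟩ = 1 := by
    rw [hφ]
    have : y * z⁻¹ = z⁻¹ * y := ((hzc' y).inv_right).eq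
    simp [this]
  have hrange : φ.range ≤ Subgroup.zpowers (φ ⟨x, hxA⟩) := by
    rintro _ ⟨⟨a, ha⟩, rfl⟩
    obtain ⟨i, j, rfl⟩ := hA a ha
    have : (⟨x ^ i * z ^ j, ha⟩ : A) = ⟨x, hxA⟩ ^ i * ⟨z, hzA⟩ ^ j := by
      ext; simp
    rw [this, map_mul, map_zpow, map_zpow, hφz]
    simp
  have hn : A.Normal := Subgroup.normal_of_index_eq_two hAi2
  have hwA : φ ⟨x, hxA⟩ ∈ A := by
    rw [hφ]
    exact A.mul_mem hxA (hn.conj_mem _ (A.inv_mem hxA) y)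
  generalize φ ⟨x, hxA⟩ = w at hrange hwA
  obtain ⟨m, hm⟩ := Subgroup.mem_zpowers_iff.mp (hrange (hφr hzc))
  rcases Int.even_or_odd m with hme | hmo
  · exfalso
    apply hzx
    obtain ⟨t, rfl⟩ := hme
    obtain ⟨i, j, rfl⟩ := hA w hwA
    rw [((hzc' (x ^ i)).zpow_right j).mul_zpow, ← zpow_mul, ← zpow_mul] at hm
    have : z ^ (j * (t + t)) = 1 := by
      rw [show j * (t + t) = (2 : ℕ) * (j * t) by push_cast; ring, zpow_mul, zpow_natCast, hzsq,
        one_zpow]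
    rw [this, mul_one] at hm
    rw [← hm]
    exact zpow_mem (Subgroup.mem_zpowers x) _
  · have hwz : w ∈ Subgroup.zpowers z := by
      obtain ⟨s, hs⟩ := hG w
      have hcop : IsCoprime m ((2 : ℤ) ^ s) := by
        apply IsCoprime.pow_right
        exact (Int.isCoprime_iff_gcd_eq_one.mpr (by
          obtain ⟨t, rfl⟩ := hmo
          simp))
      obtain ⟨a, b, hab⟩ := hcop
      have h2 : w ^ ((2 : ℤ) ^ s) = 1 := by
        have : ((2 : ℤ) ^ s) = ((2 ^ s : ℕ) : ℤ) := by push_cast; rfl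
        rw [this, zpow_natCast, hs]
      have : w = z ^ a := by
        calc w = w ^ (a * m + b * 2 ^ s) := by rw [hab, zpow_one]
          _ = z ^ a := by
            rw [zpow_add, mul_comm a, mul_comm b, zpow_mul, zpow_mul, hm, h2]; simp
      rw [this]
      exact zpow_mem (Subgroup.mem_zpowers z) _
    have hle : commutator G ≤ Subgroup.zpowers z :=
      hφr.trans (hrange.trans (Subgroup.zpowers_le.mpr hwz))
    have hc2 : Nat.card (commutator G) ≤ 2 := by
      rw [← hNcard]; exact Subgroup.card_le_of_le hle
    have hG8 : Nat.card G ≤ 8 := by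
      rw [← (commutator G).card_mul_index]
      exact Nat.mul_le_mul hc2 hi
    obtain ⟨g, hg⟩ : ∃ g : G, g ^ 2 ≠ 1 := by
      by_contra h
      push Not at h
      apply hnc
      have hinv : ∀ g : G, g⁻¹ = g := fun g => by
        rw [inv_eq_iff_mul_eq_one, ← sq, h]
      intro a b
      rw [← hinv (a * b), mul_inv_rev, hinv, hinv]
    refine ⟨g, ?_⟩
    have h4 := aux_four_le hG g hg
    have h5 := (Subgroup.zpowers g).card_mul_index
    rw [Nat.card_zpowers] at h5
    nlinarith

lemma aux_center_card {G : Type u} [Group G] [Finite G] (hG : IsPGroup 2 G)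
    (hi : (commutator G).index ≤ 4) (hna : ∃ a b : G, a * b ≠ b * a) :
    Nat.card (Subgroup.center G) = 2 := by
  have : Fact (Nat.Prime 2) := ⟨Nat.prime_two⟩
  obtain ⟨x, hx⟩ := aux_cyclic _ G hG rfl hi
  obtain ⟨p, q, hpq⟩ := hna
  have hAc : ∀ a ∈ Subgroup.zpowers x, ∀ b ∈ Subgroup.zpowers x, a * b = b * a := by
    rintro _ ⟨i, rfl⟩ _ ⟨j, rfl⟩
    exact Commute.zpow_zpow_self x i j
  have hne : Subgroup.zpowers x ≠ ⊤ := fun h =>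
    hpq (hAc p (h ▸ Subgroup.mem_top p) q (h ▸ Subgroup.mem_top q))
  set A := Subgroup.zpowers x with hAdef
  have hA2 : A.index = 2 := by
    have h0 : A.index ≠ 0 := Subgroup.index_ne_zero_of_finite
    have h1 : A.index ≠ 1 := by rwa [Ne, Subgroup.index_eq_one]
    omega
  obtain ⟨y, hy⟩ : ∃ y, y ∉ A := by
    by_contra h
    push Not at h
    exact hne (by rw [eq_top_iff]; intro g _; exact h g)
  have hZA : Subgroup.center G ≤ A := by
    intro c hc
    by_contra hcA
    have hcc := Subgroup.mem_center_iff.mp hc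
    have hdec : ∀ g : G, ∃ a ∈ A, g = a ∨ g = a * c := by
      intro g
      by_cases h : g ∈ A
      · exact ⟨g, h, Or.inl rfl⟩
      · refine ⟨g * c⁻¹, ?_, Or.inr (by group)⟩
        rw [Subgroup.mul_mem_iff_of_index_two hA2]
        simp [h, hcA]
    obtain ⟨a, ha, hp⟩ := hdec p
    obtain ⟨b, hb, hq⟩ := hdec q
    have hab : Commute a b := hAc a ha b hb
    have hC : ∀ g, Commute g c := hcc
    apply hpq
    rcases hp with rfl | rfl <;> rcases hq with rfl | rfl
    · exact hab
    · exact hab.mul_right (hC _)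
    · exact hab.mul_left (hC _).symm
    · exact (hab.mul_right (hC _)).mul_left (hC _).symm
  obtain ⟨φ, hφ, hφr⟩ := aux_comm A hA2 hAc y hy
  have h1 : Nat.card (commutator G) ≤ Nat.card φ.range := Subgroup.card_le_of_le hφr
  have h2 : Nat.card φ.ker * Nat.card φ.range = Nat.card A := by
    rw [← φ.ker.card_mul_index, Subgroup.index_ker]
  have h3 := A.card_mul_index
  have h4 := (commutator G).card_mul_index
  have h5 : Nat.card (Subgroup.center G) ≤ Nat.card φ.ker := by
    have hle : (Subgroup.center G).subgroupOf A ≤ φ.ker := by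
      rintro ⟨c, hcA⟩ hc
      rw [Subgroup.mem_subgroupOf] at hc
      have hcc := Subgroup.mem_center_iff.mp (Subgroup.inv_mem _ hc) y
      rw [MonoidHom.mem_ker, hφ]
      simp only at hcc ⊢
      rw [hcc]; group
    have := Subgroup.card_le_of_le hle
    rwa [Nat.card_congr (Subgroup.subgroupOfEquivOfLe hZA).toEquiv] at this
  have h6 : 0 < Nat.card φ.range := Nat.card_pos
  have h7 : Nat.card (Subgroup.center G) ≤ 2 := by
    rw [hA2] at h3
    by_contra hgt
    push Not at hgt
    have : Nat.card G ≤ Nat.card φ.range * 4 := by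
      rw [← h4]; exact Nat.mul_le_mul h1 hi
    nlinarith
  have : Nontrivial G := ⟨p * q, q * p, hpq⟩
  have hnt := hG.center_nontrivial
  have := Finite.one_lt_card (α := Subgroup.center G)
  omega

theorem aux_class (n : ℕ) : ∀ (G : Type u) [Group G] [Finite G] [Group.IsNilpotent G],
    IsPGroup 2 G → Nat.card G = 2 ^ (n + 2) → (commutator G).index ≤ 4 →
    Group.nilpotencyClass G = n + 1 := by
  induction n with
  | zero =>
    intro G _ _ _ hG hc hi
    have : Fact (Nat.Prime 2) := ⟨Nat.prime_two⟩
    have hcm : ∀ a b : G, a * b = b * a :=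
      (IsPGroup.isMulCommutative_of_card_eq_prime_sq (p := 2) (by simpa using hc)).is_comm.comm
    have : Nontrivial G := Finite.one_lt_card_iff_nontrivial.mp (by rw [hc]; norm_num)
    rw [Group.nilpotencyClass_eq_quotient_center_plus_one]
    have hZ : Subgroup.center G = ⊤ := by
      rw [eq_top_iff]; intro a _; rw [Subgroup.mem_center_iff]; intro g; exact hcm g a
    have : Subsingleton (G ⧸ Subgroup.center G) := by
      rw [hZ]; exact QuotientGroup.subsingleton_quotient_top
    rw [Group.nilpotencyClass_zero_iff_subsingleton.mpr this]
  | succ n ih =>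
    intro G _ _ _ hG hc hi
    have hna : ∃ a b : G, a * b ≠ b * a := by
      by_contra h
      push Not at h
      have hb : commutator G = ⊥ := by
        rw [commutator_eq_bot_iff_center_eq_top, eq_top_iff]
        intro a _
        rw [Subgroup.mem_center_iff]
        intro g; exact h g a
      rw [hb, Subgroup.index_bot, hc] at hi
      have : 2 ^ 3 ≤ 2 ^ (n + 1 + 2) := Nat.pow_le_pow_right (by norm_num) (by omega)
      omega
    have hZ := aux_center_card hG hi hna
    have : Nontrivial G := Finite.one_lt_card_iff_nontrivial.mp (by
      rw [hc]; exact Nat.one_lt_two_pow (by omega))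
    rw [Group.nilpotencyClass_eq_quotient_center_plus_one]
    rw [ih (G ⧸ Subgroup.center G) (hG.to_quotient _) ?_
      ((aux_index_map (QuotientGroup.mk' _) (QuotientGroup.mk'_surjective _)).trans hi)]
    have := (Subgroup.center G).card_mul_index
    rw [hZ, hc] at this
    have h3 : (Subgroup.center G).index = Nat.card (G ⧸ Subgroup.center G) := rfl
    rw [pow_succ] at this
    rw [show n + 1 + 1 = n + 2 from rfl] at this
    omega

lemma aux_thin_map {G B : Type*} [Group G] [Group B] (f : G →* B)
    (hf : Function.Surjective f) (h : IsThinPGroup 2 G) : IsThinPGroup 2 B := by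
  intro S hS hanti
  have hinj : Function.Injective (Subgroup.comap f) := Subgroup.comap_injective hf
  rw [← Set.ncard_image_of_injective S hinj]
  apply h
  · rintro _ ⟨N, hN, rfl⟩
    have := hS N hN
    exact Subgroup.Normal.comap this f
  · rintro _ ⟨N, hN, rfl⟩ _ ⟨M, hM, rfl⟩ hne hle
    exact hanti hN hM (fun h => hne (by rw [h])) ((Subgroup.comap_le_comap_of_surjective hf).mp hle)

lemma aux_anti {B : Type*} [CommGroup B] [Finite B] (h : IsThinPGroup 2 B) (T : Set B)
    (hT : ∀ a ∈ T, ∀ b ∈ T, a ≠ b → a ∉ Subgroup.zpowers b) : T.ncard ≤ 3 := by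
  have hinj : Set.InjOn (Subgroup.zpowers : B → Subgroup B) T := by
    intro a ha b hb hab
    by_contra hne
    exact hT a ha b hb hne (hab ▸ Subgroup.mem_zpowers a)
  rw [← hinj.ncard_image]
  apply h
  · intro N _; infer_instance
  · rintro _ ⟨a, ha, rfl⟩ _ ⟨b, hb, rfl⟩ hne hle
    exact hT a ha b hb (fun h => hne (by rw [h])) (hle (Subgroup.mem_zpowers a))

lemma aux_invol {B : Type*} [Group B] {g h : B} (hg : g ^ 2 = 1) (hh : h ∈ Subgroup.zpowers g) :
    h = 1 ∨ h = g := by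
  obtain ⟨i, rfl⟩ := Subgroup.mem_zpowers_iff.mp hh
  have h2 : g * g = 1 := by rw [← sq, hg]
  rcases Int.even_or_odd i with ⟨t, rfl⟩ | ⟨t, rfl⟩
  · left
    rw [← two_mul, zpow_mul, zpow_two, h2, one_zpow]
  · right
    rw [zpow_add, zpow_mul, zpow_two, h2, one_zpow]; simp

lemma aux_abelian {B : Type*} [CommGroup B] [Finite B] (hB : IsPGroup 2 B)
    (h : IsThinPGroup 2 B) (hcyc : ∀ x : B, Subgroup.zpowers x ≠ ⊤) : Nat.card B ≤ 4 := by
  have : Fact (Nat.Prime 2) := ⟨Nat.prime_two⟩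
  by_cases hexp : ∀ g : B, g ^ 2 = 1
  · have h3 := aux_anti h {g | g ≠ 1} (by
      intro a ha b hb hab hmem
      rcases aux_invol (hexp b) hmem with h | h
      · exact ha h
      · exact hab h)
    have h4 := Set.ncard_add_ncard_compl ({1} : Set B)
    rw [Set.ncard_singleton] at h4
    have h5 : ({1} : Set B)ᶜ = {g | g ≠ 1} := rfl
    rw [h5] at h4
    omega
  exfalso
  push Not at hexp
  obtain ⟨g0, hg0⟩ := hexp
  obtain ⟨a, ha⟩ := Finite.exists_max (fun b : B => orderOf b)
  obtain ⟨k, hk⟩ := IsPGroup.iff_orderOf.mp hB a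
  have hk2 : 2 ≤ k := by
    by_contra hlt
    have h1 := ha g0
    have h4 := aux_four_le hB g0 hg0
    have : 2 ^ k ≤ 2 ^ 1 := Nat.pow_le_pow_right (by norm_num) (by omega)
    omega
  have hpow : ∀ i : ℤ, a ^ i = 1 → (4 : ℤ) ∣ i := by
    intro i hi
    rw [← orderOf_dvd_iff_zpow_eq_one, hk] at hi
    refine dvd_trans ?_ hi
    have : (2 : ℕ) ^ 2 ∣ 2 ^ k := pow_dvd_pow 2 hk2
    exact_mod_cast this
  -- an element outside with square inside
  obtain ⟨y0, hy0, hy0s⟩ : ∃ y : B, y ∉ Subgroup.zpowers a ∧ y ^ 2 ∈ Subgroup.zpowers a := by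
    have hd : 2 ∣ Nat.card (B ⧸ Subgroup.zpowers a) := by
      rcases (hB.to_quotient (Subgroup.zpowers a)).card_eq_or_dvd with h1 | h1
      · exact absurd (Subgroup.index_eq_one.mp h1) (hcyc a)
      · exact h1
    obtain ⟨q, hq⟩ := exists_prime_orderOf_dvd_card' 2 hd
    obtain ⟨y, rfl⟩ := QuotientGroup.mk'_surjective _ q
    refine ⟨y, ?_, ?_⟩
    · rw [← QuotientGroup.eq_one_iff]
      intro h1
      rw [QuotientGroup.mk'_apply, h1] at hq
      simp at hq
    · rw [← QuotientGroup.eq_one_iff, QuotientGroup.mk_pow]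
      have := pow_orderOf_eq_one (QuotientGroup.mk' (Subgroup.zpowers a) y)
      rw [hq] at this
      exact this
  obtain ⟨j, hj⟩ := Subgroup.mem_zpowers_iff.mp hy0s
  have hjeven : Even j := by
    by_contra hodd
    rw [Int.not_even_iff_odd] at hodd
    have hmem : a ∈ Subgroup.zpowers y0 := by
      have hcop : IsCoprime j ((2 : ℤ) ^ k) := by
        apply IsCoprime.pow_right
        exact (Int.isCoprime_iff_gcd_eq_one.mpr (by
          obtain ⟨t, rfl⟩ := hodd
          simp))
      obtain ⟨c, d, hcd⟩ := hcop
      have h2 : a ^ ((2 : ℤ) ^ k) = 1 := by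
        rw [← orderOf_dvd_iff_zpow_eq_one, hk]; push_cast; exact dvd_rfl
      have : a = (y0 ^ 2) ^ c := by
        calc a = a ^ (c * j + d * 2 ^ k) := by rw [hcd, zpow_one]
          _ = _ := by rw [zpow_add, mul_comm c, mul_comm d, zpow_mul, zpow_mul, hj, h2]; simp
      rw [this]
      exact zpow_mem (pow_mem (Subgroup.mem_zpowers y0) 2) c
    have hle : Subgroup.zpowers a ≤ Subgroup.zpowers y0 := Subgroup.zpowers_le.mpr hmem
    have heq : Subgroup.zpowers a = Subgroup.zpowers y0 := by
      apply Subgroup.eq_of_le_of_card_ge hle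
      rw [Nat.card_zpowers, Nat.card_zpowers]
      exact ha y0
    exact hy0 (heq ▸ Subgroup.mem_zpowers y0)
  obtain ⟨t, rfl⟩ := hjeven
  obtain ⟨y, hya, hy2⟩ : ∃ y : B, y ∉ Subgroup.zpowers a ∧ y ^ 2 = 1 := by
    refine ⟨y0 * a ^ (-t), ?_, ?_⟩
    · intro hm
      apply hy0
      have := mul_mem hm (zpow_mem (Subgroup.mem_zpowers a) t)
      simpa using this
    · rw [mul_pow, ← hj, ← zpow_natCast (a ^ (-t)), ← zpow_mul, ← zpow_add]
      rw [show t + t + -t * ((2 : ℕ) : ℤ) = 0 by push_cast; ring, zpow_zero]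
  have hyz : ∀ i : ℤ, a ^ i ≠ y := fun i hi => hya (hi ▸ zpow_mem (Subgroup.mem_zpowers a) i)
  obtain ⟨u, m, hum, hu2, hu1⟩ : ∃ (u : B) (m : ℤ), u = a ^ m ∧ u ^ 2 = 1 ∧ u ≠ 1 := by
    refine ⟨a ^ (2 ^ (k - 1)), ((2 ^ (k - 1) : ℕ) : ℤ), by rw [zpow_natCast], ?_, ?_⟩
    · rw [← pow_mul, ← pow_succ, Nat.sub_add_cancel (by omega), ← hk, pow_orderOf_eq_one]
    · intro h1
      have := orderOf_dvd_of_pow_eq_one h1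
      rw [hk] at this
      have := (Nat.pow_dvd_pow_iff_le_right (by norm_num : 1 < 2)).mp this
      omega
  have hy1 : y ≠ 1 := fun h => hyz 0 (by rw [h, zpow_zero])
  have ha2 : a ^ 2 ≠ 1 := by
    intro h
    have := hpow 2 (by exact_mod_cast h)
    omega
  have huy2 : (u * y) ^ 2 = 1 := by rw [mul_pow, hu2, hy2, one_mul]
  have hay2 : (a * y) ^ 2 ≠ 1 := by rwa [mul_pow, hy2, mul_one]
  -- powers of a * y
  have hay : ∀ g ∈ Subgroup.zpowers (a * y), ∃ i : ℤ, (Even i ∧ g = a ^ i) ∨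
      (Odd i ∧ g = a ^ i * y) := by
    intro g hg
    obtain ⟨i, rfl⟩ := Subgroup.mem_zpowers_iff.mp hg
    refine ⟨i, ?_⟩
    have hyy : y * y = 1 := by rw [← sq, hy2]
    rcases Int.even_or_odd i with hi | hi
    · left
      refine ⟨hi, ?_⟩
      obtain ⟨t, rfl⟩ := hi
      rw [mul_zpow, ← two_mul, zpow_mul y, zpow_two, hyy, one_zpow, mul_one]
    · right
      refine ⟨hi, ?_⟩
      obtain ⟨t, rfl⟩ := hi
      rw [mul_zpow, zpow_add y, zpow_mul y, zpow_two, hyy, one_zpow, one_mul, zpow_one]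
  have hainvol : ∀ g : B, g ^ 2 = 1 → ∀ b : B, b ^ 2 ≠ 1 → b ∉ Subgroup.zpowers g := by
    intro g hg b hb hm
    rcases aux_invol hg hm with rfl | rfl
    · exact hb (one_pow 2)
    · exact hb hg
  have f1 : y ∉ Subgroup.zpowers (a * y) := by
    intro hm
    obtain ⟨i, ⟨_, hi⟩ | ⟨ho, hi⟩⟩ := hay _ hm
    · exact hyz i hi.symm
    · have := hpow i (by simpa using hi)
      obtain ⟨t, rfl⟩ := ho
      omega
  have f2 : u * y ∉ Subgroup.zpowers (a * y) := by
    intro hm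
    obtain ⟨i, ⟨_, hi⟩ | ⟨ho, hi⟩⟩ := hay _ hm
    · apply hyz (i - m)
      rw [zpow_sub, ← hi, ← hum]; simp
    · have h1 : u = a ^ i := mul_right_cancel hi
      have := hpow (i * 2) (by
        rw [zpow_mul, ← h1]; exact_mod_cast hu2)
      obtain ⟨t, rfl⟩ := ho
      omega
  have f3 : a ∉ Subgroup.zpowers (a * y) := by
    intro hm
    obtain ⟨i, ⟨he, hi⟩ | ⟨_, hi⟩⟩ := hay _ hm
    · have := hpow (i - 1) (by rw [zpow_sub, ← hi]; simp)
      obtain ⟨t, rfl⟩ := he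
      omega
    · apply hyz (1 - i)
      rw [zpow_sub, zpow_one]
      nth_rewrite 1 [hi]
      simp
  have f4 : u * y ∉ Subgroup.zpowers a := by
    intro hm
    obtain ⟨i, hi⟩ := Subgroup.mem_zpowers_iff.mp hm
    apply hyz (i - m)
    rw [zpow_sub, hi, ← hum]; simp
  have f5 : a * y ∉ Subgroup.zpowers a := by
    intro hm
    obtain ⟨i, hi⟩ := Subgroup.mem_zpowers_iff.mp hm
    apply hyz (i - 1)
    rw [zpow_sub, hi]; simp
  have f6 : y ∉ Subgroup.zpowers (u * y) := by
    intro hm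
    rcases aux_invol huy2 hm with h | h
    · exact hy1 h
    · exact hu1 (by simpa using h)
  have f7 : u * y ∉ Subgroup.zpowers y := by
    intro hm
    rcases aux_invol hy2 hm with h | h
    · exact f4 (h ▸ one_mem _)
    · exact hu1 (by simpa using h)
  have g1 := hainvol y hy2 a ha2
  have g2 := hainvol (u * y) huy2 a ha2
  have g3 := hainvol y hy2 _ hay2
  have g4 := hainvol (u * y) huy2 _ hay2
  have n1 : ∀ b c : B, b ∉ Subgroup.zpowers c → b ≠ c := fun b c h e =>
    h (e ▸ Subgroup.mem_zpowers b)
  have hT := aux_anti h {a, a * y, y, u * y} (by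
    intro b hb c hc hbc
    simp only [Set.mem_insert_iff, Set.mem_singleton_iff] at hb hc
    rcases hb with rfl | rfl | rfl | rfl <;> rcases hc with rfl | rfl | rfl | rfl <;>
      first | assumption | exact absurd rfl hbc)
  rw [Set.ncard_insert_of_notMem, Set.ncard_insert_of_notMem, Set.ncard_pair] at hT
  · omega
  · exact n1 _ _ f6
  · simp only [Set.mem_insert_iff, Set.mem_singleton_iff, not_or]
    exact ⟨n1 _ _ g3, n1 _ _ g4⟩
  · simp only [Set.mem_insert_iff, Set.mem_singleton_iff, not_or]
    exact ⟨n1 _ _ f3, n1 _ _ g1, n1 _ _ g2⟩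

lemma aux_noncyclic {G : Type*} [Group G] [Finite G] [Group.IsNilpotent G]
    (hna : ∃ a b : G, a * b ≠ b * a) (x : Abelianization G) : Subgroup.zpowers x ≠ ⊤ := by
  intro hx
  obtain ⟨g, rfl⟩ := QuotientGroup.mk'_surjective _ x
  obtain ⟨p, q, hpq⟩ := hna
  have hne : Subgroup.zpowers g ≠ ⊤ := by
    intro h
    obtain ⟨i, rfl⟩ := Subgroup.mem_zpowers_iff.mp (h ▸ Subgroup.mem_top p)
    obtain ⟨j, rfl⟩ := Subgroup.mem_zpowers_iff.mp (h ▸ Subgroup.mem_top q)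
    exact hpq (Commute.zpow_zpow_self g i j)
  obtain ⟨M, hM, hgM⟩ := (eq_top_or_exists_le_coatom (Subgroup.zpowers g)).resolve_left hne
  have hMn : M.Normal :=
    Subgroup.NormalizerCondition.normal_of_coatom M Group.normalizerCondition_of_isNilpotent hM
  have hcM : commutator G ≤ M := by
    by_contra hc
    have htop : M ⊔ commutator G = ⊤ := hM.2 _ (by
      refine lt_of_le_of_ne le_sup_left ?_
      intro h
      exact hc (h ▸ le_sup_right))
    have hmap : (commutator G).map (QuotientGroup.mk' M) = ⊤ := by
      have h1 := congrArg (Subgroup.map (QuotientGroup.mk' M)) htop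
      rw [Subgroup.map_sup, QuotientGroup.map_mk'_self, bot_sup_eq,
        Subgroup.map_top_of_surjective _ (QuotientGroup.mk'_surjective M)] at h1
      exact h1
    have hcomm : commutator (G ⧸ M) = ⊤ := by
      rw [← hmap, commutator_def, commutator_def, Subgroup.map_commutator,
        Subgroup.map_top_of_surjective _ (QuotientGroup.mk'_surjective M)]
    have : Nontrivial (G ⧸ M) := QuotientGroup.nontrivial_iff.mpr hM.1
    exact (Group.IsSolvable.commutator_lt_top_of_nontrivial (G ⧸ M)).ne hcomm
  apply hM.1
  rw [eq_top_iff]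
  intro h _
  have : QuotientGroup.mk' (commutator G) h ∈ Subgroup.zpowers (QuotientGroup.mk' (commutator G) g) :=
    hx ▸ Subgroup.mem_top _
  obtain ⟨i, hi⟩ := Subgroup.mem_zpowers_iff.mp this
  rw [← map_zpow, QuotientGroup.mk'_eq_mk'] at hi
  obtain ⟨c, hc, rfl⟩ := hi
  exact M.mul_mem (M.zpow_mem (hgM (Subgroup.mem_zpowers g)) i) (hcM hc)

/-- Every nonabelian finite thin `2`-group is of maximal class: if `|G| = 2 ^ n`, then the
nilpotency class of `G` is `n - 1`. -/
theorem thin_two_group_is_maximal_class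
    {n : ℕ} {G : Type*} [Group G] [Finite G] [Group.IsNilpotent G]
    (h2G : IsPGroup 2 G) (hthin : IsThinPGroup 2 G)
    (hna : ∃ a b : G, a * b ≠ b * a)
    (hcard : Nat.card G = 2 ^ n) :
    Group.nilpotencyClass G = n - 1 := by
  have hsurj : Function.Surjective (Abelianization.of (G := G)) := QuotientGroup.mk'_surjective _
  have hi : (commutator G).index ≤ 4 := by
    have : Finite (Abelianization G) := Finite.of_surjective _ hsurj
    exact aux_abelian (B := Abelianization G) (h2G.of_surjective _ hsurj)
      (aux_thin_map _ hsurj hthin) (aux_noncyclic hna)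
  have : Fact (Nat.Prime 2) := ⟨Nat.prime_two⟩
  have hn : 2 ≤ n := by
    by_contra hlt
    obtain ⟨a, b, hab⟩ := hna
    have hZ := aux_center_card h2G hi ⟨a, b, hab⟩
    have h1 : Nat.card G ≤ 2 := by
      rw [hcard]; exact (Nat.pow_le_pow_right (by norm_num) (by omega : n ≤ 1))
    have h2 : Subgroup.center G = ⊤ := by
      apply Subgroup.eq_top_of_le_card
      omega
    exact hab (Subgroup.mem_center_iff.mp (h2 ▸ Subgroup.mem_top b) a)
  obtain ⟨m, rfl⟩ := Nat.exists_eq_add_of_le' hn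
  rw [aux_class m G h2G hcard hi]
  omega
end
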